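/- (Deception exponent with side information) For finite alphabets X, Y, Z, distortion measure d with ∀x ∃y d(x,y)=0, D ≥ 0, and (X^n, Z^n) i.i.d. with full-support joint distribution P on X × Z, the deception exponent with side information E_Z(D) = liminf_n (1/n) min_{S_Z^(n)} log E_P[G^(n)(X^n | Z^n)] equals max_Q [R_{X|Z}(D,Q) − D(Q‖P)], with the maximum over joint distributions Q on X × Z. -/

import Mathlib

open scoped BigOperators

/-- A probability distribution on a finite alphabet. -/
def IsProbDist {X : Type*} [Fintype X] (p : X → ℝ) : Prop :=
  (∀ x, 0 ≤ p x) ∧ ∑ x, p x = 1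

/-- Relative entropy (KL divergence), natural log, convention 0 log 0 = 0. -/
noncomputable def klDiv {X : Type*} [Fintype X] (Q P : X → ℝ) : ℝ :=
  ∑ x, Q x * Real.log (Q x / P x)

/-- Mutual information of the joint law Q(x)W(y|x). -/
noncomputable def mutualInfo {X Y : Type*} [Fintype X] [Fintype Y]
    (Q : X → ℝ) (W : X → Y → ℝ) : ℝ :=
  ∑ x, ∑ y, Q x * W x y * Real.log (W x y / (∑ x', Q x' * W x' y))

/-- Rate-distortion function `R(D,Q)`. -/
noncomputable def rateDistortion {X Y : Type*} [Fintype X] [Fintype Y]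
    (d : X → Y → ℝ) (D : ℝ) (Q : X → ℝ) : ℝ :=
  sInf {r | ∃ W : X → Y → ℝ, (∀ x y, 0 ≤ W x y) ∧ (∀ x, ∑ y, W x y = 1) ∧
    (∑ x, ∑ y, Q x * W x y * d x y) ≤ D ∧ r = mutualInfo Q W}

/-- Per-symbol mean distortion between two length-n sequences. -/
noncomputable def meanDist {X Y : Type*} (d : X → Y → ℝ) {n : ℕ}
    (x : Fin n → X) (y : Fin n → Y) : ℝ :=
  (1 / (n : ℝ)) * ∑ i, d (x i) (y i)

/-- Empirical distribution (type) of a sequence. -/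
noncomputable def empDist {X : Type*} [Fintype X] [DecidableEq X] {n : ℕ}
    (x : Fin n → X) (a : X) : ℝ :=
  ((Finset.univ.filter (fun i => x i = a)).card : ℝ) / n

/-- Counting function of an adversarial strategy list: 1-based index of the
first guess within mean distortion `D` of `x` (0 if none exists). -/
noncomputable def countG {X Y : Type*} (d : X → Y → ℝ) (D : ℝ) {n : ℕ}
    (S : List (Fin n → Y)) (x : Fin n → X) : ℕ :=
  sInf {j : ℕ | ∃ y ∈ S.take j, meanDist d x y ≤ D}

/-- n-fold product (i.i.d.) distribution. -/
noncomputable def prodDist {X : Type*} (P : X → ℝ) {n : ℕ} (x : Fin n → X) : ℝ :=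
  ∏ i, P (x i)

/-- Conditional mutual information `I(X;Y|Z)` under the joint law `Q(x,z)W(y|x,z)`. -/
noncomputable def condMutualInfo {X Z Y : Type*} [Fintype X] [Fintype Z] [Fintype Y]
    (Q : X → Z → ℝ) (W : X → Z → Y → ℝ) : ℝ :=
  ∑ x, ∑ z, ∑ y, Q x z * W x z y *
    Real.log (W x z y * (∑ x', Q x' z) / (∑ x', Q x' z * W x' z y))

/-- Conditional rate-distortion function `R_{X|Z}(D,Q)` (side information at both
encoder and decoder). -/
noncomputable def condRateDistortion {X Z Y : Type*} [Fintype X] [Fintype Z] [Fintype Y]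
    (d : X → Y → ℝ) (D : ℝ) (Q : X → Z → ℝ) : ℝ :=
  sInf {r | ∃ W : X → Z → Y → ℝ, (∀ x z y, 0 ≤ W x z y) ∧
    (∀ x z, ∑ y, W x z y = 1) ∧
    (∑ x, ∑ z, ∑ y, Q x z * W x z y * d x y) ≤ D ∧
    r = condMutualInfo Q W}

/-- A joint probability distribution on `X × Z`. -/
def IsJointProbDist {X Z : Type*} [Fintype X] [Fintype Z] (p : X → Z → ℝ) : Prop :=
  (∀ x z, 0 ≤ p x z) ∧ ∑ x, ∑ z, p x z = 1

/-- Relative entropy between joint distributions on `X × Z`. -/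
noncomputable def klDiv2 {X Z : Type*} [Fintype X] [Fintype Z]
    (Q P : X → Z → ℝ) : ℝ :=
  ∑ x, ∑ z, Q x z * Real.log (Q x z / P x z)

/-- Joint empirical distribution of a pair of sequences. -/
noncomputable def jointEmpDist {X Z : Type*} [DecidableEq X] [DecidableEq Z] {n : ℕ}
    (x : Fin n → X) (z : Fin n → Z) (a : X) (b : Z) : ℝ :=
  ((Finset.univ.filter (fun i : Fin n => x i = a ∧ z i = b)).card : ℝ) / n

/-!
Lower bound: if the source law `P` is replaced by the product law of a joint distribution `Q`, the
Donsker–Varadhan inequality bounds `log E_P[G]` below by `E_Q[log G] - n D(Q‖P)`. Guessing the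
reconstruction at position `j` of the list amounts to describing it, given the side information,
with a code of length `log j + O(log n)`, so Shannon's converse gives
`E_Q[log G] ≥ n R(D, Q) - O(log n)`.

Upper bound: for each joint type `Q`, a product law `q_Q(· | z)` close to the optimal output law
gives every distortion ball around a sequence `x` of joint type `Q` with `z` mass at least
`exp (-n (R(D, Q) + ε))`. The uniform mixture over the polynomially many joint types does this for
all types at once, up to a polynomial factor. Drawing guesses from it independently would need
`1 / mass` guesses on average; a greedy list does at least as well, for the average over `x`.
Since joint type `Q` has probability at most `exp (-n D(Q‖P))`, the expected number of guesses is at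
most polynomial times `exp (n (max_Q [R(D, Q) - D(Q‖P)] + ε))`.
-/

open Finset Filter
open scoped Topology

/-! ### Relative entropy -/

section Divergence

variable {S : Type*} [Fintype S]

theorem mul_log_add_sub_mul_le_mul_log_div {a b t : ℝ} (ha : 0 ≤ a) (hb : 0 ≤ b)
    (hab : b = 0 → a = 0) (ht : 0 < t) : a * Real.log t + a - b * t ≤ a * Real.log (a / b) := by
  rcases ha.eq_or_lt with rfl | ha
  · simpa using mul_nonneg hb ht.le
  have hb : 0 < b := hb.lt_of_ne fun h => ha.ne' (hab h.symm)
  have htangent := Real.log_le_sub_one_of_pos (show 0 < b * t / a by positivity)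
  rw [Real.log_div (by positivity) ha.ne', Real.log_mul hb.ne' ht.ne'] at htangent
  rw [Real.log_div ha.ne' hb.ne']
  have hscale : a * (b * t / a - 1) = b * t - a := by field_simp
  linarith [mul_le_mul_of_nonneg_left htangent ha.le]

theorem sum_mul_log_add_sum_sub_le_klDiv {w q t : S → ℝ} (hw : ∀ s, 0 ≤ w s)
    (hq : ∀ s, 0 ≤ q s) (hwq : ∀ s, q s = 0 → w s = 0) (ht : ∀ s, 0 < t s) :
    ∑ s, w s * Real.log (t s) + ∑ s, w s - ∑ s, q s * t s ≤ klDiv w q := by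
  rw [← sum_add_distrib, ← sum_sub_distrib]
  exact sum_le_sum fun s _ =>
    mul_log_add_sub_mul_le_mul_log_div (hw s) (hq s) (hwq s) (ht s)

theorem klDiv_nonneg {w q : S → ℝ} (hw : IsProbDist w) (hq : ∀ s, 0 ≤ q s)
    (hq1 : ∑ s, q s ≤ 1) (hwq : ∀ s, q s = 0 → w s = 0) : 0 ≤ klDiv w q := by
  have := sum_mul_log_add_sum_sub_le_klDiv hw.1 hq hwq fun _ => one_pos
  simp only [Real.log_one, mul_zero, sum_const_zero, hw.2, mul_one] at this
  linarith

theorem sum_mul_log_sum_div_sum_le_klDiv {a b : S → ℝ} (ha : ∀ s, 0 ≤ a s)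
    (hb : ∀ s, 0 ≤ b s) (hab : ∀ s, b s = 0 → a s = 0) :
    (∑ s, a s) * Real.log ((∑ s, a s) / ∑ s, b s) ≤ klDiv a b := by
  rcases (sum_nonneg fun s _ => ha s).eq_or_lt with h | hA
  · have ha0 : ∀ s, a s = 0 := fun s =>
      (sum_eq_zero_iff_of_nonneg fun s _ => ha s).1 h.symm s (mem_univ s)
    simp [klDiv, ha0]
  have hB : 0 < ∑ s, b s := (sum_nonneg fun s _ => hb s).lt_of_ne' fun h =>
    hA.ne' (sum_eq_zero fun s hs =>
      hab s ((sum_eq_zero_iff_of_nonneg fun s _ => hb s).1 h s hs))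
  have := sum_mul_log_add_sum_sub_le_klDiv ha hb hab fun _ => div_pos hA hB
  rwa [← sum_mul, ← sum_mul, mul_div_cancel₀ _ hB.ne', add_sub_cancel_right] at this

/-- The Donsker–Varadhan inequality. -/
theorem sum_mul_log_le_log_sum_mul_add_klDiv {p r g : S → ℝ} (hp : IsProbDist p)
    (hr : ∀ s, 0 < r s) (hg : ∀ s, 0 < g s) :
    ∑ s, p s * Real.log (g s) ≤ Real.log (∑ s, r s * g s) + klDiv p r := by
  have hlogsum := sum_mul_log_sum_div_sum_le_klDiv hp.1 (fun s => (mul_pos (hr s) (hg s)).le)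
    fun s h => absurd h (mul_pos (hr s) (hg s)).ne'
  have hsplit : klDiv p (fun s => r s * g s) = klDiv p r - ∑ s, p s * Real.log (g s) := by
    rw [klDiv, klDiv, ← sum_sub_distrib]
    refine sum_congr rfl fun s _ => ?_
    rcases eq_or_ne (p s) 0 with h | h
    · simp [h]
    · rw [← div_div, Real.log_div (div_ne_zero h (hr s).ne') (hg s).ne', mul_sub]
  rw [hp.2, one_mul, one_div, Real.log_inv, hsplit] at hlogsum
  linarith

/-- The data-processing inequality for the event `B`, with the entropy of `B` under `w` bounded
crudely. -/
theorem sum_mul_neg_log_sum_le_klDiv_add_one {w q : S → ℝ} (hw : IsProbDist w)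
    (hq : IsProbDist q) (hwq : ∀ s, q s = 0 → w s = 0) {B : Finset S} (hB : 0 < ∑ s ∈ B, q s) :
    (∑ s ∈ B, w s) * -Real.log (∑ s ∈ B, q s) ≤ klDiv w q + 1 := by
  classical
  have hvar := sum_mul_log_add_sum_sub_le_klDiv
    (t := fun s => if s ∈ B then (∑ s ∈ B, q s)⁻¹ else 1)
    hw.1 hq.1 hwq fun s => by split_ifs <;> positivity
  have hlog : ∑ s, w s * Real.log (if s ∈ B then (∑ s ∈ B, q s)⁻¹ else 1) =
      (∑ s ∈ B, w s) * -Real.log (∑ s ∈ B, q s) := by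
    simp only [apply_ite Real.log, Real.log_inv, Real.log_one, mul_ite, mul_zero, sum_ite_mem,
      univ_inter, sum_mul]
  have hlin : ∑ s, q s * (if s ∈ B then (∑ s ∈ B, q s)⁻¹ else 1) ≤ 2 := by
    calc ∑ s, q s * (if s ∈ B then (∑ s ∈ B, q s)⁻¹ else 1)
        ≤ ∑ s, ((if s ∈ B then q s * (∑ s ∈ B, q s)⁻¹ else 0) + q s) :=
          sum_le_sum fun s _ => by split_ifs <;> simp [hq.1 s]
      _ = 2 := by
          rw [sum_add_distrib, hq.2, sum_ite_mem, univ_inter, ← sum_mul,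
            mul_inv_cancel₀ hB.ne']
          norm_num
  rw [hlog, hw.2] at hvar
  linarith

theorem klDiv_mixture_le {w₀ w₁ q₀ q₁ : S → ℝ} (hw₀ : ∀ s, 0 ≤ w₀ s) (hw₁ : ∀ s, 0 ≤ w₁ s)
    (hq₀ : ∀ s, 0 ≤ q₀ s) (hq₁ : ∀ s, 0 ≤ q₁ s) (h₀ : ∀ s, q₀ s = 0 → w₀ s = 0)
    (h₁ : ∀ s, q₁ s = 0 → w₁ s = 0) {θ : ℝ} (hθ0 : 0 < θ) (hθ1 : θ < 1) :
    klDiv (fun s => (1 - θ) * w₀ s + θ * w₁ s) (fun s => (1 - θ) * q₀ s + θ * q₁ s) ≤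
      (1 - θ) * klDiv w₀ q₀ + θ * klDiv w₁ q₁ := by
  have hθ : 0 < 1 - θ := sub_pos.2 hθ1
  simp_rw [klDiv, mul_sum]
  rw [← sum_add_distrib]
  refine sum_le_sum fun s _ => ?_
  have hlogsum := sum_mul_log_sum_div_sum_le_klDiv
    (a := ![(1 - θ) * w₀ s, θ * w₁ s]) (b := ![(1 - θ) * q₀ s, θ * q₁ s])
    (by simp [Fin.forall_fin_two, mul_nonneg, hθ.le, hθ0.le, hw₀ s, hw₁ s])
    (by simp [Fin.forall_fin_two, mul_nonneg, hθ.le, hθ0.le, hq₀ s, hq₁ s])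
    (by simpa [Fin.forall_fin_two, hθ.ne', hθ0.ne'] using ⟨h₀ s, h₁ s⟩)
  simpa [klDiv, Fin.sum_univ_two, mul_div_mul_left _ _ hθ.ne', mul_div_mul_left _ _ hθ0.ne',
    mul_assoc] using hlogsum

end Divergence

section ProbDist

variable {S : Type*} [Fintype S]

theorem IsProbDist.mixture {w₀ w₁ : S → ℝ} (h₀ : IsProbDist w₀) (h₁ : IsProbDist w₁) {θ : ℝ}
    (hθ0 : 0 ≤ θ) (hθ1 : θ ≤ 1) : IsProbDist fun s => (1 - θ) * w₀ s + θ * w₁ s :=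
  ⟨fun s => add_nonneg (mul_nonneg (sub_nonneg.2 hθ1) (h₀.1 s)) (mul_nonneg hθ0 (h₁.1 s)), by
    rw [sum_add_distrib, ← mul_sum, ← mul_sum, h₀.2, h₁.2]; ring⟩

theorem IsProbDist.sum_le_one {w : S → ℝ} (hw : IsProbDist w) (B : Finset S) :
    ∑ s ∈ B, w s ≤ 1 :=
  (sum_le_univ_sum_of_nonneg hw.1).trans_eq hw.2

theorem isProbDist_single [DecidableEq S] (s : S) : IsProbDist (Pi.single s (1 : ℝ)) :=
  ⟨fun t => by rw [Pi.single_apply]; split_ifs <;> norm_num, by simp⟩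

theorem klDiv_single [DecidableEq S] (s : S) (q : S → ℝ) :
    klDiv (Pi.single s (1 : ℝ)) q = -Real.log (q s) := by
  simp [klDiv, Pi.single_apply]

theorem isProbDist_uniform [Nonempty S] : IsProbDist fun _ : S => 1 / (Fintype.card S : ℝ) :=
  ⟨fun _ => by positivity, by simp⟩

end ProbDist

/-! ### Product laws -/

section ProductLaw

variable {ι β : Type*} [Fintype ι]

/-- The product of the laws `w i`: the law of a family of independent letters. -/
def productLaw (w : ι → β → ℝ) (y : ι → β) : ℝ :=
  ∏ i, w i (y i)

variable [DecidableEq ι] [Fintype β]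

theorem sum_productLaw (w : ι → β → ℝ) : ∑ y, productLaw w y = ∏ i, ∑ b, w i b :=
  (Fintype.prod_sum w).symm

theorem isProbDist_productLaw {w : ι → β → ℝ} (hw : ∀ i, IsProbDist (w i)) :
    IsProbDist (productLaw w) :=
  ⟨fun _ => prod_nonneg fun i _ => (hw i).1 _, by simp [sum_productLaw, (hw _).2]⟩

theorem sum_productLaw_mul_apply {w : ι → β → ℝ} (hw : ∀ i, ∑ b, w i b = 1) (i : ι) (h : β → ℝ) :
    ∑ y, productLaw w y * h (y i) = ∑ b, w i b * h b := by
  have hfactor : ∀ y, productLaw w y * h (y i) =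
      productLaw (fun j b => w j b * if j = i then h b else 1) y := fun y => by
    simp only [productLaw, prod_mul_distrib, prod_ite_eq', mem_univ, if_true]
  simp_rw [hfactor]
  rw [sum_productLaw, prod_eq_single i (fun j _ hj => by simp [hj, hw]) (by simp)]
  simp

theorem sum_productLaw_mul_sum {w : ι → β → ℝ} (hw : ∀ i, ∑ b, w i b = 1) (h : ι → β → ℝ) :
    ∑ y, productLaw w y * ∑ i, h i (y i) = ∑ i, ∑ b, w i b * h i b := by
  simp_rw [mul_sum]
  rw [sum_comm]
  exact sum_congr rfl fun i _ => sum_productLaw_mul_apply hw i (h i)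

theorem klDiv_productLaw {w q : ι → β → ℝ} (hw : ∀ i, ∑ b, w i b = 1)
    (hwq : ∀ i b, q i b = 0 → w i b = 0) :
    klDiv (productLaw w) (productLaw q) = ∑ i, klDiv (w i) (q i) := by
  rw [klDiv]
  simp_rw [klDiv, ← sum_productLaw_mul_sum hw fun i b => Real.log (w i b / q i b)]
  refine sum_congr rfl fun y _ => ?_
  rcases eq_or_ne (productLaw w y) 0 with h | h
  · simp [h]
  · have hne : ∀ i ∈ univ, w i (y i) ≠ 0 := prod_ne_zero_iff.1 h
    rw [← Real.log_prod fun i hi => div_ne_zero (hne i hi) (mt (hwq i _) (hne i hi)),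
      prod_div_distrib]
    rfl

end ProductLaw

section PairLaw

variable {ι X Z : Type*} [Fintype ι]

/-- The law of a pair of sequences whose pairs of letters are drawn independently from `Q`. -/
def pairLaw (Q : X → Z → ℝ) (s : (ι → X) × (ι → Z)) : ℝ :=
  ∏ i, Q (s.1 i) (s.2 i)

variable [DecidableEq ι] [Fintype X] [Fintype Z]

theorem sum_prodArrow_eq_sum_arrowProd (F : (ι → X) × (ι → Z) → ℝ) :
    ∑ s, F s = ∑ u, F (Equiv.arrowProdEquivProdArrow ι (fun _ => X) (fun _ => Z) u) :=
  (Equiv.sum_comp _ F).symm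

theorem IsJointProbDist.isProbDist_uncurry {Q : X → Z → ℝ} (hQ : IsJointProbDist Q) :
    IsProbDist fun u : X × Z => Q u.1 u.2 :=
  ⟨fun _ => hQ.1 _ _, by rw [Fintype.sum_prod_type]; exact hQ.2⟩

theorem isProbDist_pairLaw {Q : X → Z → ℝ} (hQ : IsJointProbDist Q) :
    IsProbDist (pairLaw Q : (ι → X) × (ι → Z) → ℝ) :=
  ⟨fun _ => prod_nonneg fun _ _ => hQ.1 _ _, by
    rw [sum_prodArrow_eq_sum_arrowProd]
    exact (isProbDist_productLaw fun _ : ι => hQ.isProbDist_uncurry).2⟩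

theorem sum_pairLaw_mul_sum {Q : X → Z → ℝ} (hQ : IsJointProbDist Q) (h : X → Z → ℝ) :
    ∑ s : (ι → X) × (ι → Z), pairLaw Q s * ∑ i, h (s.1 i) (s.2 i) =
      Fintype.card ι * ∑ a, ∑ b, Q a b * h a b := by
  rw [sum_prodArrow_eq_sum_arrowProd]
  refine (sum_productLaw_mul_sum (fun _ : ι => hQ.isProbDist_uncurry.2)
    fun _ u => h u.1 u.2).trans ?_
  simp [Fintype.sum_prod_type]

theorem klDiv_pairLaw {Q P : X → Z → ℝ} (hQ : IsJointProbDist Q)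
    (hQP : ∀ a b, P a b = 0 → Q a b = 0) :
    klDiv (pairLaw Q : (ι → X) × (ι → Z) → ℝ) (pairLaw P) = Fintype.card ι * klDiv2 Q P := by
  rw [klDiv, sum_prodArrow_eq_sum_arrowProd]
  refine (klDiv_productLaw (fun _ : ι => hQ.isProbDist_uncurry.2)
    fun _ (u : X × Z) => hQP u.1 u.2).trans ?_
  simp [klDiv, klDiv2, Fintype.sum_prod_type]

end PairLaw

/-! ### Conditional mutual information -/

section OutputLaw

variable {X Z Y : Type*} [Fintype X] {Q : X → Z → ℝ} {W : X → Z → Y → ℝ}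

theorem sum_ne_zero_of_apply_ne_zero (hQ : ∀ a b, 0 ≤ Q a b) {a : X} {b : Z} (h : Q a b ≠ 0) :
    ∑ a', Q a' b ≠ 0 :=
  (sum_pos' (fun a' _ => hQ a' b) ⟨a, mem_univ a, (hQ a b).lt_of_ne' h⟩).ne'

/-- The output law `q(y|z)` induced by `Q(x,z)` and `W(y|x,z)`, set to `W(·|x₀,z)` for an
arbitrary `x₀` when `z` has probability zero, so that it is always a channel. -/
noncomputable def outputLaw [Nonempty X] (Q : X → Z → ℝ) (W : X → Z → Y → ℝ) (b : Z) (y : Y) : ℝ :=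
  open Classical in
  if ∑ a, Q a b = 0 then W (Classical.arbitrary X) b y
  else (∑ a, Q a b * W a b y) / ∑ a, Q a b

variable [Fintype Y]

theorem isProbDist_outputLaw [Nonempty X] (hQ : ∀ a b, 0 ≤ Q a b)
    (hW : ∀ a b, IsProbDist (W a b)) (b : Z) : IsProbDist (outputLaw Q W b) := by
  by_cases h : ∑ a, Q a b = 0
  · have hconst : outputLaw Q W b = W (Classical.arbitrary X) b :=
      funext fun y => by rw [outputLaw, if_pos h]
    rw [hconst]
    exact hW _ b
  · have hmix : outputLaw Q W b = fun y => (∑ a, Q a b * W a b y) / ∑ a, Q a b :=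
      funext fun y => by rw [outputLaw, if_neg h]
    rw [hmix]
    refine ⟨fun y => div_nonneg (sum_nonneg fun a _ => mul_nonneg (hQ a b) ((hW a b).1 y))
      (sum_nonneg fun a _ => hQ a b), ?_⟩
    rw [← sum_div, sum_comm]
    simp_rw [← mul_sum, (hW _ _).2, mul_one]
    exact div_self h

theorem eq_zero_of_outputLaw_eq_zero [Nonempty X] (hQ : ∀ a b, 0 ≤ Q a b)
    (hW : ∀ a b, IsProbDist (W a b)) {a : X} {b : Z} {y : Y} (h : Q a b ≠ 0)
    (h0 : outputLaw Q W b y = 0) : W a b y = 0 := by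
  have hs := sum_ne_zero_of_apply_ne_zero hQ h
  rw [outputLaw, if_neg hs, div_eq_zero_iff, or_iff_left hs,
    sum_eq_zero_iff_of_nonneg fun a _ => mul_nonneg (hQ a b) ((hW a b).1 y)] at h0
  exact (mul_eq_zero.1 (h0 a (mem_univ a))).resolve_left h

variable [Fintype Z]

theorem condMutualInfo_eq_sum_mul_klDiv [Nonempty X] (hQ : ∀ a b, 0 ≤ Q a b) :
    condMutualInfo Q W = ∑ a, ∑ b, Q a b * klDiv (W a b) (outputLaw Q W b) := by
  simp_rw [condMutualInfo, klDiv, mul_sum (s := (univ : Finset Y))]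
  refine sum_congr rfl fun a _ => sum_congr rfl fun b _ => sum_congr rfl fun y _ => ?_
  rcases eq_or_ne (Q a b) 0 with h | h
  · simp [h]
  · rw [outputLaw, if_neg (sum_ne_zero_of_apply_ne_zero hQ h), div_div_eq_mul_div, mul_assoc]

theorem condMutualInfo_nonneg [Nonempty X] (hQ : ∀ a b, 0 ≤ Q a b)
    (hW : ∀ a b, IsProbDist (W a b)) : 0 ≤ condMutualInfo Q W := by
  rw [condMutualInfo_eq_sum_mul_klDiv hQ]
  refine sum_nonneg fun a _ => sum_nonneg fun b _ => ?_
  rcases eq_or_ne (Q a b) 0 with h | h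
  · simp [h]
  · have hq := isProbDist_outputLaw hQ hW b
    exact mul_nonneg (hQ a b) (klDiv_nonneg (hW a b) hq.1 hq.2.le fun y =>
      eq_zero_of_outputLaw_eq_zero hQ hW h)

end OutputLaw

section RateDistortion

variable {X Z Y : Type*} [Fintype X] [Fintype Z] [Fintype Y]
  {d : X → Y → ℝ} {D : ℝ} {Q : X → Z → ℝ}

theorem condRateDistortion_le_condMutualInfo [Nonempty X] (hQ : ∀ a b, 0 ≤ Q a b)
    {W : X → Z → Y → ℝ} (hW : ∀ a b, IsProbDist (W a b))
    (hWD : ∑ a, ∑ b, ∑ y, Q a b * W a b y * d a y ≤ D) :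
    condRateDistortion d D Q ≤ condMutualInfo Q W := by
  refine csInf_le ⟨0, ?_⟩ ⟨W, fun a b => (hW a b).1, fun a b => (hW a b).2, hWD, rfl⟩
  rintro _ ⟨W', h0, h1, -, rfl⟩
  exact condMutualInfo_nonneg hQ fun a b => ⟨h0 a b, h1 a b⟩

theorem exists_channel_condMutualInfo_lt (hzero : ∀ x, ∃ y, d x y = 0) (hD : 0 ≤ D)
    (Q : X → Z → ℝ) {ε : ℝ} (hε : 0 < ε) :
    ∃ W : X → Z → Y → ℝ, (∀ a b, IsProbDist (W a b)) ∧
      ∑ a, ∑ b, ∑ y, Q a b * W a b y * d a y ≤ D ∧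
        condMutualInfo Q W < condRateDistortion d D Q + ε := by
  classical
  choose r hr using hzero
  have hne : {i | ∃ W : X → Z → Y → ℝ, (∀ a b y, 0 ≤ W a b y) ∧ (∀ a b, ∑ y, W a b y = 1) ∧
      (∑ a, ∑ b, ∑ y, Q a b * W a b y * d a y) ≤ D ∧ i = condMutualInfo Q W}.Nonempty :=
    ⟨_, fun a _ => Pi.single (r a) 1, fun a _ => (isProbDist_single (r a)).1,
      fun a _ => (isProbDist_single (r a)).2, by simpa [Pi.single_apply, hr] using hD, rfl⟩
  obtain ⟨_, ⟨W, h0, h1, hWD, rfl⟩, hlt⟩ := exists_lt_of_csInf_lt hne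
    (lt_add_of_pos_right (condRateDistortion d D Q) hε)
  exact ⟨W, fun a b => ⟨h0 a b, h1 a b⟩, hWD, hlt⟩

end RateDistortion

section Coupling

/-- The conditional law of `x` given `(z, y)` under the joint law `M` (zero when `(z, y)` has
probability zero). -/
noncomputable def posterior {X Z Y : Type*} [Fintype X] (M : X → Z → Y → ℝ) (b : Z) (y : Y)
    (a : X) : ℝ :=
  M a b y / ∑ a', M a' b y

variable {X Z Y : Type*} [Fintype Y] {M : X → Z → Y → ℝ} {Q : X → Z → ℝ}

theorem eq_zero_of_sum_eq_zero (hM : ∀ a b y, 0 ≤ M a b y) (hMQ : ∀ a b, ∑ y, M a b y = Q a b)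
    {a : X} {b : Z} (h : Q a b = 0) (y : Y) : M a b y = 0 :=
  (sum_eq_zero_iff_of_nonneg fun y _ => hM a b y).1 ((hMQ a b).trans h) y (mem_univ y)

theorem exists_channel_mul_eq [Nonempty Y] (hM : ∀ a b y, 0 ≤ M a b y)
    (hMQ : ∀ a b, ∑ y, M a b y = Q a b) :
    ∃ W : X → Z → Y → ℝ, (∀ a b, IsProbDist (W a b)) ∧ ∀ a b y, Q a b * W a b y = M a b y := by
  classical
  refine ⟨fun a b => if Q a b = 0 then fun _ => 1 / (Fintype.card Y : ℝ)
    else fun y => M a b y / Q a b, fun a b => ?_, fun a b y => ?_⟩ <;>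
    dsimp only <;> split_ifs with h
  · exact isProbDist_uniform
  · exact ⟨fun y => div_nonneg (hM a b y) ((sum_nonneg fun y _ => hM a b y).trans_eq (hMQ a b)),
      by rw [← sum_div, hMQ, div_self h]⟩
  · rw [h, zero_mul, eq_zero_of_sum_eq_zero hM hMQ h]
  · exact mul_div_cancel₀ _ h

theorem condRateDistortion_le_of_coupling [Fintype X] [Nonempty X] [Nonempty Y] [Fintype Z]
    {d : X → Y → ℝ} {D : ℝ} (hM : ∀ a b y, 0 ≤ M a b y) (hMQ : ∀ a b, ∑ y, M a b y = Q a b)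
    (hMD : ∑ a, ∑ b, ∑ y, M a b y * d a y ≤ D) :
    condRateDistortion d D Q ≤ ∑ a, ∑ b, ∑ y, M a b y *
      Real.log (posterior M b y a * (∑ a', Q a' b) / Q a b) := by
  obtain ⟨W, hW, hQW⟩ := exists_channel_mul_eq hM hMQ
  refine (condRateDistortion_le_condMutualInfo
    (fun a b => (sum_nonneg fun y _ => hM a b y).trans_eq (hMQ a b)) hW
    (by simpa only [hQW] using hMD)).trans_eq ?_
  refine sum_congr rfl fun a _ => sum_congr rfl fun b _ => sum_congr rfl fun y _ => ?_
  simp_rw [hQW]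
  rcases eq_or_ne (Q a b) 0 with h | h
  · simp [eq_zero_of_sum_eq_zero hM hMQ h]
  · rw [posterior, ← hQW a b y]
    congr 2
    field_simp

end Coupling

/-! ### Converse -/

section AveragedLaw

/-- The law of `φ i s` for `s` drawn with weights `p` and `i` drawn uniformly. -/
noncomputable def averagedLaw {Ω ι T : Type*} [Fintype Ω] [Fintype ι] (p : Ω → ℝ)
    (φ : ι → Ω → T) (t : T) : ℝ :=
  open Classical in
  (1 / (Fintype.card ι : ℝ)) * ∑ s, p s * ∑ i, if φ i s = t then 1 else 0

variable {Ω ι T : Type*} [Fintype Ω] [Fintype ι] {p : Ω → ℝ} {φ : ι → Ω → T}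

theorem averagedLaw_nonneg (hp : ∀ s, 0 ≤ p s) (t : T) : 0 ≤ averagedLaw p φ t := by
  refine mul_nonneg (by positivity) (sum_nonneg fun s _ => mul_nonneg (hp s)
    (sum_nonneg fun i _ => ?_))
  split_ifs <;> norm_num

theorem averagedLaw_pos (hp : ∀ s, 0 ≤ p s) {s : Ω} (hs : 0 < p s) (i : ι) :
    0 < averagedLaw p φ (φ i s) := by
  classical
  have : Nonempty ι := ⟨i⟩
  refine mul_pos (by positivity) (sum_pos' (fun s' _ => mul_nonneg (hp s')
    (sum_nonneg fun i' _ => ?_)) ⟨s, mem_univ s, mul_pos hs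
      (sum_pos' (fun i' _ => ?_) ⟨i, mem_univ i, by simp⟩)⟩) <;>
  split_ifs <;> norm_num

theorem sum_averagedLaw_mul [Fintype T] (g : T → ℝ) :
    ∑ t, averagedLaw p φ t * g t =
      (1 / (Fintype.card ι : ℝ)) * ∑ s, p s * ∑ i, g (φ i s) := by
  classical
  simp_rw [averagedLaw, mul_assoc, ← mul_sum, sum_mul]
  rw [sum_comm]
  simp_rw [mul_assoc, ← mul_sum, sum_mul]
  congr 1
  refine sum_congr rfl fun s _ => ?_
  rw [sum_comm]
  simp

end AveragedLaw

section InducedCoupling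

variable {ι X Z Y : Type*} [Fintype ι] [DecidableEq ι] [Fintype X] [Fintype Z] {Q : X → Z → ℝ}
  {f : (ι → X) × (ι → Z) → ι → Y}

/-- The joint law of `(x i, z i, f (x, z) i)` at a uniformly random position `i`, when the pairs
`(x i, z i)` are drawn independently from `Q`. -/
noncomputable def inducedCoupling (Q : X → Z → ℝ) (f : (ι → X) × (ι → Z) → ι → Y) (a : X) (b : Z)
    (y : Y) : ℝ :=
  averagedLaw (pairLaw Q) (fun i s => (s.1 i, s.2 i, f s i)) (a, b, y)

theorem inducedCoupling_nonneg (hQ : IsJointProbDist Q) (a : X) (b : Z) (y : Y) :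
    0 ≤ inducedCoupling Q f a b y :=
  averagedLaw_nonneg (isProbDist_pairLaw hQ).1 _

theorem inducedCoupling_pos (hQ : IsJointProbDist Q) {s : (ι → X) × (ι → Z)}
    (hs : 0 < pairLaw Q s) (i : ι) : 0 < inducedCoupling Q f (s.1 i) (s.2 i) (f s i) :=
  averagedLaw_pos (φ := fun i (s : (ι → X) × (ι → Z)) => (s.1 i, s.2 i, f s i))
    (isProbDist_pairLaw hQ).1 hs i

variable [Fintype Y]

theorem sum_inducedCoupling_mul (g : X → Z → Y → ℝ) :
    ∑ a, ∑ b, ∑ y, inducedCoupling Q f a b y * g a b y =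
      (1 / (Fintype.card ι : ℝ)) * ∑ s, pairLaw Q s * ∑ i, g (s.1 i) (s.2 i) (f s i) := by
  have := sum_averagedLaw_mul (p := pairLaw Q)
    (φ := fun i (s : (ι → X) × (ι → Z)) => (s.1 i, s.2 i, f s i)) fun t => g t.1 t.2.1 t.2.2
  rwa [Fintype.sum_prod_type, sum_congr rfl fun a _ => Fintype.sum_prod_type _] at this

variable [Nonempty ι]

theorem sum_inducedCoupling (hQ : IsJointProbDist Q) (a : X) (b : Z) :
    ∑ y, inducedCoupling Q f a b y = Q a b := by
  classical
  have h := sum_inducedCoupling_mul (Q := Q) (f := f)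
    fun a' b' _ => if a' = a then if b' = b then 1 else 0 else 0
  rw [sum_pairLaw_mul_sum hQ fun a' b' => if a' = a then if b' = b then 1 else 0 else 0] at h
  simpa using h

theorem sum_inducedCoupling_mul_dist_le {d : X → Y → ℝ} {D : ℝ} (hQ : IsJointProbDist Q)
    (hf : ∀ s, ∑ i, d (s.1 i) (f s i) ≤ Fintype.card ι * D) :
    ∑ a, ∑ b, ∑ y, inducedCoupling Q f a b y * d a y ≤ D := by
  rw [sum_inducedCoupling_mul fun a _ y => d a y, one_div_mul_eq_div,
    div_le_iff₀' (by positivity)]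
  calc ∑ s, pairLaw Q s * ∑ i, d (s.1 i) (f s i)
      ≤ ∑ s : (ι → X) × (ι → Z), pairLaw Q s * (Fintype.card ι * D) :=
        sum_le_sum fun s _ => mul_le_mul_of_nonneg_left (hf s) ((isProbDist_pairLaw hQ).1 s)
    _ = Fintype.card ι * D := by rw [← sum_mul, (isProbDist_pairLaw hQ).2, one_mul]

end InducedCoupling

section Posterior

variable {X Z Y : Type*} [Fintype X] {M : X → Z → Y → ℝ}

theorem posterior_nonneg (hM : ∀ a b y, 0 ≤ M a b y) (b : Z) (y : Y) (a : X) :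
    0 ≤ posterior M b y a :=
  div_nonneg (hM a b y) (sum_nonneg fun a' _ => hM a' b y)

theorem posterior_pos (hM : ∀ a b y, 0 ≤ M a b y) {a : X} {b : Z} {y : Y} (h : 0 < M a b y) :
    0 < posterior M b y a :=
  div_pos h (sum_pos' (fun a' _ => hM a' b y) ⟨a, mem_univ a, h⟩)

theorem sum_posterior_le_one (b : Z) (y : Y) : ∑ a, posterior M b y a ≤ 1 := by
  simp_rw [posterior, ← sum_div]
  exact div_self_le_one _

end Posterior

section ReverseLaw

variable {ι X Z Y : Type*} [Fintype ι]

/-- The mass a decoder assigns to the pair `s = (x, z)`: draw `z` from `m`, then a reconstruction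
from `q z`, which must be `f s`, and then `x` through the reverse channel `U`. -/
def reverseLaw (m : Z → ℝ) (q : (ι → Z) → (ι → Y) → ℝ) (U : Z → Y → X → ℝ)
    (f : (ι → X) × (ι → Z) → ι → Y) (s : (ι → X) × (ι → Z)) : ℝ :=
  productLaw (fun _ => m) s.2 * (q s.2 (f s) * productLaw (fun i => U (s.2 i) (f s i)) s.1)

variable {m : Z → ℝ} {q : (ι → Z) → (ι → Y) → ℝ} {U : Z → Y → X → ℝ}
  {f : (ι → X) × (ι → Z) → ι → Y}

theorem reverseLaw_nonneg (hm : ∀ b, 0 ≤ m b) (hq : ∀ z y, 0 ≤ q z y) (hU : ∀ b y a, 0 ≤ U b y a)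
    (s : (ι → X) × (ι → Z)) : 0 ≤ reverseLaw m q U f s :=
  mul_nonneg (prod_nonneg fun _ _ => hm _) (mul_nonneg (hq _ _) (prod_nonneg fun _ _ => hU _ _ _))

theorem sum_reverseLaw_le_one [DecidableEq ι] [Fintype X] [Fintype Z] [Fintype Y]
    (hm : IsProbDist m) (hq : ∀ z y, 0 ≤ q z y) (hq1 : ∀ z, ∑ y, q z y ≤ 1)
    (hU : ∀ b y a, 0 ≤ U b y a) (hU1 : ∀ b y, ∑ a, U b y a ≤ 1) :
    ∑ s, reverseLaw m q U f s ≤ 1 := by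
  have hm' := isProbDist_productLaw fun _ : ι => hm
  have hU' : ∀ (z : ι → Z) (y : ι → Y) (x : ι → X),
      0 ≤ productLaw (fun i => U (z i) (y i)) x := fun _ _ _ => prod_nonneg fun _ _ => hU _ _ _
  have hxsum : ∀ z, ∑ x, q z (f (x, z)) * productLaw (fun i => U (z i) (f (x, z) i)) x ≤ 1 :=
    fun z => calc
      ∑ x, q z (f (x, z)) * productLaw (fun i => U (z i) (f (x, z) i)) x
          ≤ ∑ x, ∑ y, q z y * productLaw (fun i => U (z i) (y i)) x :=
            sum_le_sum fun x _ => single_le_sum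
              (f := fun y => q z y * productLaw (fun i => U (z i) (y i)) x)
              (fun y _ => mul_nonneg (hq z y) (hU' z y x)) (mem_univ (f (x, z)))
      _ = ∑ y, q z y * ∏ i, ∑ a, U (z i) (y i) a := by
            rw [sum_comm]
            simp_rw [← mul_sum, sum_productLaw]
      _ ≤ ∑ y, q z y := sum_le_sum fun y _ => mul_le_of_le_one_right (hq z y)
            (prod_le_one (fun i _ => sum_nonneg fun a _ => hU _ _ a) fun i _ => hU1 _ _)
      _ ≤ 1 := hq1 z
  rw [Fintype.sum_prod_type_right]
  calc ∑ z, ∑ x, reverseLaw m q U f (x, z)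
      ≤ ∑ z, productLaw (fun _ : ι => m) z := sum_le_sum fun z _ => by
        simp_rw [reverseLaw, ← mul_sum]
        exact mul_le_of_le_one_right (hm'.1 z) (hxsum z)
    _ = 1 := hm'.2

theorem reverseLaw_pos {s : (ι → X) × (ι → Z)} (hm : ∀ i, 0 < m (s.2 i)) (hq : 0 < q s.2 (f s))
    (hU : ∀ i, 0 < U (s.2 i) (f s i) (s.1 i)) : 0 < reverseLaw m q U f s :=
  mul_pos (prod_pos fun i _ => hm i) (mul_pos hq (prod_pos fun i _ => hU i))

theorem log_pairLaw_div_reverseLaw {Q : X → Z → ℝ} {s : (ι → X) × (ι → Z)}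
    (hQ : ∀ i, 0 < Q (s.1 i) (s.2 i)) (hm : ∀ i, 0 < m (s.2 i)) (hq : 0 < q s.2 (f s))
    (hU : ∀ i, 0 < U (s.2 i) (f s i) (s.1 i)) :
    Real.log (pairLaw Q s / reverseLaw m q U f s) = -Real.log (q s.2 (f s)) -
      ∑ i, Real.log (U (s.2 i) (f s i) (s.1 i) * m (s.2 i) / Q (s.1 i) (s.2 i)) := by
  have hratio : ∀ i ∈ univ, U (s.2 i) (f s i) (s.1 i) * m (s.2 i) / Q (s.1 i) (s.2 i) ≠ 0 :=
    fun i _ => (div_pos (mul_pos (hU i) (hm i)) (hQ i)).ne'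
  have hsplit : pairLaw Q s / reverseLaw m q U f s = (q s.2 (f s) *
      ∏ i, U (s.2 i) (f s i) (s.1 i) * m (s.2 i) / Q (s.1 i) (s.2 i))⁻¹ := by
    rw [pairLaw, reverseLaw, productLaw, productLaw, prod_div_distrib, prod_mul_distrib,
      ← mul_div_assoc, inv_div]
    congr 1
    ring
  rw [hsplit, Real.log_inv, Real.log_mul hq.ne' (prod_ne_zero_iff.2 hratio), Real.log_prod hratio]
  ring

end ReverseLaw

section RateConverse

variable {ι X Z Y : Type*} [Fintype ι] [Fintype X] [Fintype Z] {Q : X → Z → ℝ}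

theorem IsJointProbDist.isProbDist_sum_left (hQ : IsJointProbDist Q) :
    IsProbDist fun b => ∑ a, Q a b :=
  ⟨fun b => sum_nonneg fun a _ => hQ.1 a b, by rw [sum_comm]; exact hQ.2⟩

theorem apply_pos_of_pairLaw_pos (hQ : IsJointProbDist Q) {s : (ι → X) × (ι → Z)}
    (hs : 0 < pairLaw Q s) (i : ι) : 0 < Q (s.1 i) (s.2 i) :=
  (hQ.1 _ _).lt_of_ne' fun h => hs.ne' (prod_eq_zero (mem_univ i) h)

theorem sum_left_pos_of_pairLaw_pos (hQ : IsJointProbDist Q) {s : (ι → X) × (ι → Z)}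
    (hs : 0 < pairLaw Q s) (i : ι) : 0 < ∑ a, Q a (s.2 i) :=
  sum_pos' (fun a _ => hQ.1 a _) ⟨s.1 i, mem_univ _, apply_pos_of_pairLaw_pos hQ hs i⟩

variable [DecidableEq ι] {f : (ι → X) × (ι → Z) → ι → Y} {q : (ι → Z) → (ι → Y) → ℝ}

/-- The mass of `s = (x, z)` under the decoder of `inducedCoupling Q f`. -/
noncomputable def inducedReverseLaw (Q : X → Z → ℝ) (q : (ι → Z) → (ι → Y) → ℝ)
    (f : (ι → X) × (ι → Z) → ι → Y) : (ι → X) × (ι → Z) → ℝ :=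
  reverseLaw (fun b => ∑ a, Q a b) q (posterior (inducedCoupling Q f)) f

theorem posterior_inducedCoupling_pos (hQ : IsJointProbDist Q) {s : (ι → X) × (ι → Z)}
    (hs : 0 < pairLaw Q s) (i : ι) :
    0 < posterior (inducedCoupling Q f) (s.2 i) (f s i) (s.1 i) :=
  posterior_pos (inducedCoupling_nonneg hQ) (inducedCoupling_pos hQ hs i)

theorem klDiv_pairLaw_inducedReverseLaw (hQ : IsJointProbDist Q) (hqf : ∀ s, 0 < q s.2 (f s)) :
    klDiv (pairLaw Q) (inducedReverseLaw Q q f) =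
      ∑ s, pairLaw Q s * -Real.log (q s.2 (f s)) - ∑ s, pairLaw Q s * ∑ i, Real.log
        (posterior (inducedCoupling Q f) (s.2 i) (f s i) (s.1 i) * (∑ a, Q a (s.2 i)) /
          Q (s.1 i) (s.2 i)) := by
  rw [klDiv, ← sum_sub_distrib]
  refine sum_congr rfl fun s _ => ?_
  rw [← mul_sub]
  rcases ((isProbDist_pairLaw hQ).1 s).eq_or_lt with h | h
  · rw [← h, zero_mul, zero_mul]
  · rw [inducedReverseLaw, log_pairLaw_div_reverseLaw (apply_pos_of_pairLaw_pos hQ h)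
      (sum_left_pos_of_pairLaw_pos hQ h) (hqf s) (posterior_inducedCoupling_pos hQ h)]

/-- Shannon's converse: `klDiv (pairLaw Q) (inducedReverseLaw Q q f) ≥ 0`, where the sum of the
logarithms of the reverse channel is the information of the single-letter coupling. -/
theorem card_mul_condRateDistortion_le [Nonempty ι] [Nonempty X] [Fintype Y] [Nonempty Y]
    {d : X → Y → ℝ} {D : ℝ} (hQ : IsJointProbDist Q)
    (hf : ∀ s, ∑ i, d (s.1 i) (f s i) ≤ Fintype.card ι * D) (hq : ∀ z y, 0 ≤ q z y)
    (hq1 : ∀ z, ∑ y, q z y ≤ 1) (hqf : ∀ s, 0 < q s.2 (f s)) :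
    Fintype.card ι * condRateDistortion d D Q ≤ ∑ s, pairLaw Q s * -Real.log (q s.2 (f s)) := by
  have hM := inducedCoupling_nonneg (f := f) hQ
  have hm := hQ.isProbDist_sum_left
  have hrate := condRateDistortion_le_of_coupling hM (sum_inducedCoupling hQ)
    (sum_inducedCoupling_mul_dist_le hQ hf)
  rw [sum_inducedCoupling_mul fun a b y => Real.log (posterior (inducedCoupling Q f) b y a *
    (∑ a', Q a' b) / Q a b), one_div_mul_eq_div, le_div_iff₀' (by positivity)] at hrate
  have hdiv : 0 ≤ klDiv (pairLaw Q) (inducedReverseLaw Q q f) := by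
    refine klDiv_nonneg (isProbDist_pairLaw hQ)
      (reverseLaw_nonneg hm.1 hq (posterior_nonneg hM))
      (sum_reverseLaw_le_one hm hq hq1 (posterior_nonneg hM) sum_posterior_le_one)
      fun s h0 => by_contra fun h => ?_
    have hs := ((isProbDist_pairLaw hQ).1 s).lt_of_ne' h
    exact (reverseLaw_pos (sum_left_pos_of_pairLaw_pos hQ hs) (hqf s)
      (posterior_inducedCoupling_pos hQ hs)).ne' h0
  rw [klDiv_pairLaw_inducedReverseLaw hQ hqf] at hdiv
  linarith

end RateConverse

section FirstHit

variable {β : Type*} {C : β → Prop} {S : List β}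

/-- Position (1-based) of the first entry `y` of `S` with `C y`, and `0` if there is none;
`countG d D S x` is the case where `C y` says that `meanDist d x y ≤ D`. -/
noncomputable def firstHit (C : β → Prop) (S : List β) : ℕ :=
  sInf {j : ℕ | ∃ y ∈ S.take j, C y}

theorem exists_mem_take_firstHit (h : ∃ y ∈ S, C y) : ∃ y ∈ S.take (firstHit C S), C y :=
  Nat.sInf_mem (s := {j : ℕ | ∃ y ∈ S.take j, C y}) ⟨S.length, by simpa using h⟩

theorem exists_idxOf_lt_firstHit [DecidableEq β] (h : ∃ y ∈ S, C y) :
    ∃ y ∈ S, C y ∧ S.idxOf y < firstHit C S := by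
  obtain ⟨y, hy, hCy⟩ := exists_mem_take_firstHit h
  have hyS := List.mem_of_mem_take hy
  exact ⟨y, hyS, hCy, (List.mem_take_iff_idxOf_lt hyS).1 hy⟩

end FirstHit

section HarmonicCode

theorem sum_one_div_succ_le_harmonic (s : Finset ℕ) :
    ∑ k ∈ s, (1 : ℝ) / (k + 1) ≤ harmonic s.card := by
  induction s using Finset.induction_on_max with
  | empty => simp
  | insert m s hm ih =>
    have hms : m ∉ s := fun h => lt_irrefl _ (hm m h)
    have hcard : s.card ≤ m := by
      simpa using card_le_card fun k hk => mem_range.2 (hm k hk)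
    rw [sum_insert hms, card_insert_of_notMem hms, harmonic_succ]
    have hterm : (1 : ℝ) / (m + 1) ≤ ((s.card + 1 : ℕ) : ℝ)⁻¹ := by
      rw [← one_div]; push_cast; gcongr
    push_cast at hterm ⊢
    linarith

theorem one_add_log_natCast_pos (k : ℕ) : 0 < 1 + Real.log k := by
  linarith [Real.log_natCast_nonneg k]

variable {β : Type*} [Fintype β] [DecidableEq β] {S : List β}

/-- The subprobability proportional to the inverse rank in the list `S`. -/
noncomputable def harmonicCode (S : List β) (y : β) : ℝ :=
  (if y ∈ S then 1 / ((S.idxOf y : ℝ) + 1) else 0) / (1 + Real.log (Fintype.card β))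

theorem harmonicCode_nonneg (S : List β) (y : β) : 0 ≤ harmonicCode S y := by
  refine div_nonneg ?_ (one_add_log_natCast_pos _).le
  split_ifs <;> positivity

theorem harmonicCode_pos {y : β} (hy : y ∈ S) : 0 < harmonicCode S y := by
  rw [harmonicCode, if_pos hy]
  exact div_pos (by positivity) (one_add_log_natCast_pos _)

theorem sum_harmonicCode_le_one (S : List β) : ∑ y, harmonicCode S y ≤ 1 := by
  have hinj : Set.InjOn (fun y => S.idxOf y) (S.toFinset : Set β) := fun y hy y' _ h =>
    (List.idxOf_inj (by simpa using hy)).1 h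
  have hcard : (S.toFinset.image fun y => S.idxOf y).card ≤ Fintype.card β :=
    card_image_le.trans (card_le_univ _)
  have hmono : harmonic (S.toFinset.image fun y => S.idxOf y).card ≤ harmonic (Fintype.card β) :=
    sum_le_sum_of_subset_of_nonneg (range_subset_range.2 hcard) fun _ _ _ => by positivity
  have hfilter : univ.filter (· ∈ S) = S.toFinset := by ext; simp
  simp_rw [harmonicCode]
  rw [← sum_div, div_le_one (one_add_log_natCast_pos _), ← sum_filter, hfilter]
  calc ∑ y ∈ S.toFinset, 1 / ((S.idxOf y : ℝ) + 1)
      = ∑ k ∈ (S.toFinset.image fun y => S.idxOf y), 1 / ((k : ℝ) + 1) := by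
        rw [sum_image hinj]
    _ ≤ harmonic (S.toFinset.image fun y => S.idxOf y).card := sum_one_div_succ_le_harmonic _
    _ ≤ harmonic (Fintype.card β) := mod_cast hmono
    _ ≤ 1 + Real.log (Fintype.card β) := harmonic_le_one_add_log _

theorem neg_log_harmonicCode_le {y : β} {j : ℕ} (hy : y ∈ S) (hj : S.idxOf y < j) :
    -Real.log (harmonicCode S y) ≤ Real.log j + Real.log (1 + Real.log (Fintype.card β)) := by
  have hle : ((S.idxOf y : ℝ) + 1) ≤ j := mod_cast hj
  have hlog := Real.log_le_log (by positivity) hle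
  rw [harmonicCode, if_pos hy, Real.log_div (by positivity) (one_add_log_natCast_pos _).ne',
    one_div, Real.log_inv]
  linarith

end HarmonicCode

section Strategy

variable {X Z Y : Type*} {d : X → Y → ℝ} {D : ℝ} {n : ℕ}

/-- A guessing strategy is complete if, for every side information, its list reaches every source
sequence within distortion `D`. -/
def IsCompleteStrategy (d : X → Y → ℝ) (D : ℝ) (St : (Fin n → Z) → List (Fin n → Y)) : Prop :=
  ∀ (z : Fin n → Z) (x : Fin n → X), ∃ y ∈ St z, meanDist d x y ≤ D

theorem meanDist_le_iff (hn : 0 < n) {x : Fin n → X} {y : Fin n → Y} :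
    meanDist d x y ≤ D ↔ ∑ i, d (x i) (y i) ≤ n * D := by
  rw [meanDist, one_div_mul_eq_div, div_le_iff₀' (mod_cast hn)]

variable [Fintype X] [Fintype Z]

/-- The expected number of guesses of the strategy `St` under independent draws from `P`. -/
noncomputable def expectedGuesses (d : X → Y → ℝ) (D : ℝ) (P : X → Z → ℝ)
    (St : (Fin n → Z) → List (Fin n → Y)) : ℝ :=
  ∑ x : Fin n → X, ∑ z : Fin n → Z, (∏ i, P (x i) (z i)) * (countG d D (St z) x : ℝ)

theorem expectedGuesses_eq_sum_pairLaw (P : X → Z → ℝ) (St : (Fin n → Z) → List (Fin n → Y)) :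
    expectedGuesses d D P St =
      ∑ s : (Fin n → X) × (Fin n → Z), pairLaw P s * countG d D (St s.2) s.1 := by
  rw [Fintype.sum_prod_type]
  rfl

theorem mul_condRateDistortion_sub_klDiv2_le_log_expectedGuesses [Fintype Y] [Nonempty X]
    [Nonempty Y] {P Q : X → Z → ℝ} (hP : ∀ a b, 0 < P a b) (hQ : IsJointProbDist Q) (hn : 0 < n)
    {St : (Fin n → Z) → List (Fin n → Y)} (hSt : IsCompleteStrategy d D St) :
    n * (condRateDistortion d D Q - klDiv2 Q P) ≤
      Real.log (expectedGuesses d D P St) + Real.log (1 + n * Real.log (Fintype.card Y)) := by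
  classical
  have : Nonempty (Fin n) := ⟨⟨0, hn⟩⟩
  have hp := isProbDist_pairLaw (ι := Fin n) hQ
  choose f hfmem hf hidx using fun s : (Fin n → X) × (Fin n → Z) =>
    exists_idxOf_lt_firstHit (hSt s.2 s.1)
  have hshannon := card_mul_condRateDistortion_le (d := d) (D := D) (f := f)
    (q := fun z => harmonicCode (St z)) hQ
    (fun s => by simpa using (meanDist_le_iff hn).1 (hf s))
    (fun z => harmonicCode_nonneg (St z)) (fun z => sum_harmonicCode_le_one (St z))
    fun s => harmonicCode_pos (hfmem s)
  have hcode : ∑ s, pairLaw Q s * -Real.log (harmonicCode (St s.2) (f s)) ≤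
      ∑ s, pairLaw Q s * Real.log (countG d D (St s.2) s.1) +
        Real.log (1 + n * Real.log (Fintype.card Y)) := by
    calc ∑ s, pairLaw Q s * -Real.log (harmonicCode (St s.2) (f s))
        ≤ ∑ s, pairLaw Q s * (Real.log (countG d D (St s.2) s.1) +
            Real.log (1 + n * Real.log (Fintype.card Y))) :=
          sum_le_sum fun s _ => mul_le_mul_of_nonneg_left
            (by simpa [countG, firstHit] using neg_log_harmonicCode_le (hfmem s) (hidx s)) (hp.1 s)
      _ = _ := by simp_rw [mul_add, sum_add_distrib, ← sum_mul, hp.2, one_mul]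
  have hDV := sum_mul_log_le_log_sum_mul_add_klDiv (r := pairLaw P)
    (g := fun s => (countG d D (St s.2) s.1 : ℝ)) hp
    (fun s => prod_pos fun i _ => hP (s.1 i) (s.2 i))
    fun s => mod_cast (Nat.zero_le _).trans_lt (hidx s)
  have hkl := klDiv_pairLaw (ι := Fin n) hQ fun a b h => absurd h (hP a b).ne'
  rw [Fintype.card_fin] at hshannon hkl
  rw [hkl, ← expectedGuesses_eq_sum_pairLaw] at hDV
  linarith

end Strategy

/-! ### Greedy guessing lists -/

section GreedyList

theorem IsProbDist.exists_le_of_le_sum_mul {β : Type*} [Fintype β] {q F : β → ℝ}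
    (hq : IsProbDist q) {r : ℝ} (h : r ≤ ∑ y, q y * F y) : ∃ y, r ≤ F y := by
  by_contra! hlt
  obtain ⟨y, hy, hqy⟩ : ∃ y ∈ univ, 0 < q y := exists_lt_of_sum_lt (by simp [hq.2])
  have hsum : ∑ y, q y * F y < ∑ y, q y * r :=
    sum_lt_sum (fun y _ => mul_le_mul_of_nonneg_left (hlt y).le (hq.1 y))
      ⟨y, hy, mul_lt_mul_of_pos_left (hlt y) hqy⟩
  rw [← sum_mul, hq.2, one_mul] at hsum
  exact hsum.not_ge h

theorem firstHit_cons_le_one {β : Type*} {C : β → Prop} {y : β} (h : C y) (S : List β) :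
    firstHit C (y :: S) ≤ 1 :=
  Nat.sInf_le ⟨y, by simp, h⟩

theorem firstHit_cons_le {β : Type*} {C : β → Prop} {S : List β} (h : ∃ y ∈ S, C y) (y : β) :
    firstHit C (y :: S) ≤ firstHit C S + 1 := by
  obtain ⟨y', hy', hC⟩ := exists_mem_take_firstHit h
  exact Nat.sInf_le ⟨y', by rw [List.take_succ_cons]; exact List.mem_cons_of_mem _ hy', hC⟩

variable {α β : Type*} [Fintype β] {C : α → β → Prop} [∀ x, DecidablePred (C x)] {q : β → ℝ}
  {w : α → ℝ}

theorem exists_guess_sum_le_sum_filter_div (hq : IsProbDist q)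
    (hC : ∀ x, 0 < ∑ y with C x y, q y) (s : Finset α) :
    ∃ y, ∑ x ∈ s, w x ≤ ∑ x ∈ s with C x y, w x / ∑ y with C x y, q y := by
  refine hq.exists_le_of_le_sum_mul (Eq.le ?_)
  simp_rw [sum_filter (s := s), mul_sum]
  rw [sum_comm]
  refine sum_congr rfl fun x _ => ?_
  simp_rw [mul_ite, mul_zero]
  rw [← sum_filter, ← sum_mul, mul_div_cancel₀ _ (hC x).ne']

/-- Guess next the entry that removes the most weight, each `x` being counted with weight
`w x / q {y | C x y}`. -/
theorem exists_list_sum_mul_firstHit_le (hq : IsProbDist q) (hw : ∀ x, 0 < w x)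
    (hC : ∀ x, 0 < ∑ y with C x y, q y) (s : Finset α) :
    ∃ S : List β, (∀ x ∈ s, ∃ y ∈ S, C x y) ∧
      ∑ x ∈ s, w x * firstHit (C x) S ≤ ∑ x ∈ s, w x / ∑ y with C x y, q y := by
  induction s using Finset.strongInduction with
  | H s ih =>
  rcases s.eq_empty_or_nonempty with rfl | hs
  · exact ⟨[], by simp, by simp⟩
  obtain ⟨y, hy⟩ := exists_guess_sum_le_sum_filter_div hq hC s (w := w)
  obtain ⟨x₀, hx₀⟩ : (s.filter fun x => C x y).Nonempty := by
    by_contra! hempty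
    rw [hempty, sum_empty] at hy
    exact (sum_pos (fun x _ => hw x) hs).not_ge hy
  have hx₀' := mem_filter.1 hx₀
  obtain ⟨S, hS, hle⟩ := ih (s.filter fun x => ¬ C x y)
    (filter_ssubset.2 ⟨x₀, hx₀'.1, not_not.2 hx₀'.2⟩)
  refine ⟨y :: S, fun x hx => ?_, ?_⟩
  · by_cases hxy : C x y
    · exact ⟨y, by simp, hxy⟩
    · obtain ⟨y', hy', h⟩ := hS x (mem_filter.2 ⟨hx, hxy⟩)
      exact ⟨y', List.mem_cons_of_mem _ hy', h⟩
  · have hhit : ∑ x ∈ s with C x y, w x * firstHit (C x) (y :: S) ≤ ∑ x ∈ s with C x y, w x :=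
      sum_le_sum fun x hx => mul_le_of_le_one_right (hw x).le
        (mod_cast firstHit_cons_le_one (mem_filter.1 hx).2 S)
    have hmiss : ∑ x ∈ s with ¬ C x y, w x * firstHit (C x) (y :: S) ≤
        ∑ x ∈ s with ¬ C x y, (w x * firstHit (C x) S + w x) :=
      sum_le_sum fun x hx => by
        rw [← mul_add_one]
        exact mul_le_mul_of_nonneg_left (mod_cast firstHit_cons_le (hS x hx) y) (hw x).le
    rw [sum_add_distrib] at hmiss
    rw [← sum_filter_add_sum_filter_not s (fun x => C x y)] at hy ⊢
    rw [← sum_filter_add_sum_filter_not s (fun x => C x y) fun x => w x / _]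
    linarith

end GreedyList

/-! ### Random codes meeting the distortion constraint -/

section Chernoff

theorem sum_mul_exp_le_exp {β : Type*} [Fintype β] {w e : β → ℝ} {c : ℝ} (hw : IsProbDist w)
    (he : ∀ b, |e b| ≤ c) (hc : c ≤ 1) :
    ∑ b, w b * Real.exp (e b) ≤ Real.exp (∑ b, w b * e b + c ^ 2) := by
  have hexp : ∀ b, Real.exp (e b) ≤ e b + (c ^ 2 + 1) := fun b => by
    have hquad := (abs_le.1 (Real.abs_exp_sub_one_sub_id_le ((he b).trans hc))).2
    have hsq : e b ^ 2 ≤ c ^ 2 := sq_le_sq' (abs_le.1 (he b)).1 (abs_le.1 (he b)).2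
    linarith
  calc ∑ b, w b * Real.exp (e b)
      ≤ ∑ b, w b * (e b + (c ^ 2 + 1)) :=
        sum_le_sum fun b _ => mul_le_mul_of_nonneg_left (hexp b) (hw.1 b)
    _ = ∑ b, w b * e b + c ^ 2 + 1 := by
        simp_rw [mul_add (w _), sum_add_distrib, ← sum_mul, hw.2]
        ring
    _ ≤ Real.exp (∑ b, w b * e b + c ^ 2) := Real.add_one_le_exp _

variable {ι β : Type*} [Fintype ι] [Fintype β] {w e : ι → β → ℝ}

theorem sum_productLaw_mul_exp_sum_le [DecidableEq ι] {c : ℝ} (hw : ∀ i, IsProbDist (w i))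
    (he : ∀ i b, |e i b| ≤ c) (hc : c ≤ 1) :
    ∑ y, productLaw w y * Real.exp (∑ i, e i (y i)) ≤
      Real.exp (∑ i, ∑ b, w i b * e i b + Fintype.card ι * c ^ 2) := by
  calc ∑ y, productLaw w y * Real.exp (∑ i, e i (y i))
      = ∏ i, ∑ b, w i b * Real.exp (e i b) := by
        rw [← sum_productLaw]
        simp_rw [productLaw, Real.exp_sum, prod_mul_distrib]
    _ ≤ ∏ i, Real.exp (∑ b, w i b * e i b + c ^ 2) :=
        prod_le_prod
          (fun i _ => sum_nonneg fun b _ => mul_nonneg ((hw i).1 b) (Real.exp_nonneg _))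
          fun i _ => sum_mul_exp_le_exp (hw i) (he i) hc
    _ = Real.exp (∑ i, ∑ b, w i b * e i b + Fintype.card ι * c ^ 2) := by
        rw [← Real.exp_sum, sum_add_distrib, sum_const, card_univ, nsmul_eq_mul]

theorem sum_productLaw_le_exp {c t : ℝ} (hw : ∀ i, IsProbDist (w i)) (he : ∀ i b, |e i b| ≤ c)
    (hc : c ≤ 1) {B : Finset (ι → β)} (hB : ∀ y ∈ B, t ≤ ∑ i, e i (y i)) :
    ∑ y ∈ B, productLaw w y ≤
      Real.exp (∑ i, ∑ b, w i b * e i b + Fintype.card ι * c ^ 2 - t) := by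
  classical
  have hp := (isProbDist_productLaw hw).1
  rw [Real.exp_sub, le_div_iff₀ (Real.exp_pos t), sum_mul]
  calc ∑ y ∈ B, productLaw w y * Real.exp t
      ≤ ∑ y ∈ B, productLaw w y * Real.exp (∑ i, e i (y i)) :=
        sum_le_sum fun y hy =>
          mul_le_mul_of_nonneg_left (Real.exp_le_exp.2 (hB y hy)) (hp y)
    _ ≤ ∑ y, productLaw w y * Real.exp (∑ i, e i (y i)) :=
        sum_le_univ_sum_of_nonneg fun y => mul_nonneg (hp y) (Real.exp_nonneg _)
    _ ≤ _ := sum_productLaw_mul_exp_sum_le hw he hc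

end Chernoff

section DistortionBall

variable {X Y : Type*} [Fintype Y] {d : X → Y → ℝ} {D : ℝ}

theorem sum_meanDist_le_zero_eq_one {n : ℕ} (hd : ∀ a y, 0 ≤ d a y) (hn : 0 < n) {x : Fin n → X}
    {w : Fin n → Y → ℝ} (hw : ∀ i, IsProbDist (w i))
    (hmean : ∑ i, ∑ y, w i y * d (x i) y ≤ 0) :
    ∑ y with meanDist d x y ≤ 0, productLaw w y = 1 := by
  have hp := isProbDist_productLaw hw
  have hterm : ∀ y, 0 ≤ productLaw w y * ∑ i, d (x i) (y i) := fun y =>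
    mul_nonneg (hp.1 y) (sum_nonneg fun i _ => hd _ _)
  rw [← sum_productLaw_mul_sum (fun i => (hw i).2) fun i => d (x i)] at hmean
  have hvanish := (sum_eq_zero_iff_of_nonneg fun y _ => hterm y).1
    (hmean.antisymm (sum_nonneg fun y _ => hterm y))
  rw [← hp.2]
  refine sum_subset (filter_subset _ _) fun y hy hball => ?_
  refine (mul_eq_zero.1 (hvanish y hy)).resolve_right fun h => hball ?_
  rw [mem_filter, meanDist_le_iff hn, mul_zero]
  exact ⟨hy, h.le⟩

variable [Finite X]

theorem exists_forall_sum_meanDist_gt_le_exp (d : X → Y → ℝ) {D' : ℝ} (hD : D' < D) :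
    ∃ κ : ℝ, 0 < κ ∧ ∀ n : ℕ, 0 < n → ∀ (x : Fin n → X) (w : Fin n → Y → ℝ),
      (∀ i, IsProbDist (w i)) → ∑ i, ∑ y, w i y * d (x i) y ≤ n * D' →
        ∑ y with ¬ meanDist d x y ≤ D, productLaw w y ≤ Real.exp (-(n * κ)) := by
  have := Fintype.ofFinite X
  set K : ℝ := ∑ a, ∑ y, |d a y|
  have hK : ∀ a y, |d a y| ≤ K := fun a y =>
    (single_le_sum (f := fun y => |d a y|) (fun y _ => abs_nonneg _) (mem_univ y)).trans
      (single_le_sum (f := fun a => ∑ y, |d a y|) (fun a _ => sum_nonneg fun y _ => abs_nonneg _)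
        (mem_univ a))
  have hK0 : 0 ≤ K := sum_nonneg fun a _ => sum_nonneg fun y _ => abs_nonneg _
  obtain ⟨s, hs, hsK⟩ := exists_pos_mul_lt (lt_min one_pos (sub_pos.2 hD)) (K + K ^ 2)
  obtain ⟨hs1, hsD⟩ := lt_min_iff.1 hsK
  refine ⟨s * (D - D' - K ^ 2 * s), mul_pos hs (by nlinarith), fun n hn x w hw hmean => ?_⟩
  have hchernoff := sum_productLaw_le_exp (e := fun i y => s * d (x i) y) (c := s * K)
    (t := n * (s * D)) (B := univ.filter fun y => ¬ meanDist d x y ≤ D) hw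
    (fun i y => by rw [abs_mul, abs_of_pos hs]; exact mul_le_mul_of_nonneg_left (hK _ _) hs.le)
    (by nlinarith) fun y hy => by
      have hgt := (mem_filter.1 hy).2
      rw [meanDist_le_iff hn, not_le] at hgt
      rw [← mul_sum, mul_left_comm]
      exact mul_le_mul_of_nonneg_left hgt.le hs.le
  refine hchernoff.trans (Real.exp_le_exp.2 ?_)
  simp_rw [mul_left_comm _ s, ← mul_sum, Fintype.card_fin]
  linarith [mul_le_mul_of_nonneg_left hmean hs.le]

theorem eventually_sub_le_sum_meanDist_le (hd : ∀ a y, 0 ≤ d a y) (hD : 0 ≤ D) {θ η : ℝ}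
    (hθ : 0 < θ) (hη : 0 < η) :
    ∀ᶠ n : ℕ in atTop, ∀ (x : Fin n → X) (w : Fin n → Y → ℝ), (∀ i, IsProbDist (w i)) →
      ∑ i, ∑ y, w i y * d (x i) y ≤ n * ((1 - θ) * D) →
        1 - η ≤ ∑ y with meanDist d x y ≤ D, productLaw w y := by
  rcases hD.eq_or_lt with rfl | hD
  · filter_upwards [eventually_gt_atTop 0] with n hn x w hw hmean
    rw [sum_meanDist_le_zero_eq_one hd hn hw (by simpa using hmean)]
    linarith
  · obtain ⟨κ, hκ, htail⟩ := exists_forall_sum_meanDist_gt_le_exp d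
      (show (1 - θ) * D < D by nlinarith)
    have hlim : Tendsto (fun n : ℕ => Real.exp (-(n * κ))) atTop (𝓝 0) :=
      Real.tendsto_exp_neg_atTop_nhds_zero.comp
        (tendsto_natCast_atTop_atTop.atTop_mul_const hκ)
    filter_upwards [eventually_gt_atTop 0, hlim.eventually_lt_const hη] with n hn hlt x w hw hmean
    have hsplit := sum_filter_add_sum_filter_not univ (fun y => meanDist d x y ≤ D) (productLaw w)
    rw [(isProbDist_productLaw hw).2] at hsplit
    linarith [htail n hn x w hw hmean]

end DistortionBall

/-! ### Joint types -/

section JointType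

variable {X Z : Type*} [DecidableEq X] [DecidableEq Z] {n : ℕ}

theorem jointEmpDist_apply_pos (x : Fin n → X) (z : Fin n → Z) (i : Fin n) :
    0 < jointEmpDist x z (x i) (z i) := by
  have hcard : 0 < (univ.filter fun j => x j = x i ∧ z j = z i).card :=
    card_pos.2 ⟨i, by simp⟩
  have hn := i.pos
  unfold jointEmpDist
  positivity

variable [Fintype X] [Fintype Z]

theorem sum_apply_eq_mul_sum_jointEmpDist (hn : 0 < n) (x : Fin n → X) (z : Fin n → Z)
    (g : X → Z → ℝ) :
    ∑ i, g (x i) (z i) = n * ∑ a, ∑ b, jointEmpDist x z a b * g a b := by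
  have hn' : (n : ℝ) ≠ 0 := mod_cast hn.ne'
  have hindicator : ∀ i, g (x i) (z i) =
      ∑ a, ∑ b, if x i = a ∧ z i = b then g a b else 0 := fun i => by simp [ite_and]
  simp_rw [hindicator]
  rw [sum_comm, mul_sum]
  refine sum_congr rfl fun a _ => ?_
  rw [sum_comm, mul_sum]
  refine sum_congr rfl fun b _ => ?_
  rw [← sum_filter, sum_const, nsmul_eq_mul, jointEmpDist]
  field_simp

theorem isJointProbDist_jointEmpDist (hn : 0 < n) (x : Fin n → X) (z : Fin n → Z) :
    IsJointProbDist (jointEmpDist x z) := by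
  refine ⟨fun a b => by unfold jointEmpDist; positivity, ?_⟩
  have hn' : (n : ℝ) ≠ 0 := mod_cast hn.ne'
  have hsum := sum_apply_eq_mul_sum_jointEmpDist hn x z fun _ _ => 1
  simpa [hn', eq_comm] using hsum

theorem pairLaw_eq_pairLaw_jointEmpDist_mul_exp (hn : 0 < n) {P : X → Z → ℝ}
    (hP : ∀ a b, 0 < P a b) (s : (Fin n → X) × (Fin n → Z)) :
    pairLaw P s = pairLaw (jointEmpDist s.1 s.2) s *
      Real.exp (-(n * klDiv2 (jointEmpDist s.1 s.2) P)) := by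
  have hpos := jointEmpDist_apply_pos s.1 s.2
  rw [klDiv2, ← sum_apply_eq_mul_sum_jointEmpDist hn s.1 s.2
    fun a b => Real.log (jointEmpDist s.1 s.2 a b / P a b), ← sum_neg_distrib, Real.exp_sum,
    pairLaw, pairLaw, ← prod_mul_distrib]
  refine prod_congr rfl fun i _ => ?_
  rw [← Real.log_inv, Real.exp_log (inv_pos.2 (div_pos (hpos i) (hP _ _))), inv_div,
    mul_div_cancel₀ _ (hpos i).ne']

open Classical in
/-- The set of joint types of length `n`, that is, of joint empirical distributions of pairs of
sequences of length `n`. -/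
noncomputable def jointTypes (X Z : Type*) [Fintype X] [Fintype Z] [DecidableEq X] [DecidableEq Z]
    (n : ℕ) : Finset (X → Z → ℝ) :=
  univ.image fun s : (Fin n → X) × (Fin n → Z) => jointEmpDist s.1 s.2

theorem jointEmpDist_mem_jointTypes (x : Fin n → X) (z : Fin n → Z) :
    jointEmpDist x z ∈ jointTypes X Z n :=
  mem_image.2 ⟨(x, z), mem_univ _, rfl⟩

theorem isJointProbDist_of_mem_jointTypes (hn : 0 < n) {Q : X → Z → ℝ}
    (hQ : Q ∈ jointTypes X Z n) : IsJointProbDist Q := by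
  obtain ⟨s, -, rfl⟩ := mem_image.1 hQ
  exact isJointProbDist_jointEmpDist hn s.1 s.2

theorem card_jointTypes_le (X Z : Type*) [Fintype X] [Fintype Z] [DecidableEq X] [DecidableEq Z]
    (n : ℕ) : (jointTypes X Z n).card ≤ (n + 1) ^ (Fintype.card Z * Fintype.card X) := by
  classical
  have hsub : jointTypes X Z n ⊆
      univ.image fun (k : X → Z → Fin (n + 1)) a b => ((k a b : ℕ) : ℝ) / n := by
    intro Q hQ
    obtain ⟨s, -, rfl⟩ := mem_image.1 hQ
    exact mem_image.2 ⟨fun a b => ⟨(univ.filter fun i => s.1 i = a ∧ s.2 i = b).card,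
      Nat.lt_succ_of_le ((card_le_univ _).trans_eq (Fintype.card_fin n))⟩, mem_univ _, rfl⟩
  refine (card_le_card hsub).trans (card_image_le.trans_eq ?_)
  simp [pow_mul]

theorem sum_pairLaw_jointEmpDist_le_card (hn : 0 < n) :
    ∑ s : (Fin n → X) × (Fin n → Z), pairLaw (jointEmpDist s.1 s.2) s ≤
      (jointTypes X Z n).card := by
  have hprob : ∀ Q ∈ jointTypes X Z n, IsProbDist (pairLaw Q : (Fin n → X) × (Fin n → Z) → ℝ) :=
    fun Q hQ => isProbDist_pairLaw (isJointProbDist_of_mem_jointTypes hn hQ)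
  calc ∑ s : (Fin n → X) × (Fin n → Z), pairLaw (jointEmpDist s.1 s.2) s
      ≤ ∑ s : (Fin n → X) × (Fin n → Z), ∑ Q ∈ jointTypes X Z n, pairLaw Q s :=
        sum_le_sum fun s _ => single_le_sum (f := fun Q => pairLaw Q s)
          (fun Q hQ => (hprob Q hQ).1 s) (jointEmpDist_mem_jointTypes s.1 s.2)
    _ = ∑ Q ∈ jointTypes X Z n, 1 := by
        rw [sum_comm]
        exact sum_congr rfl fun Q hQ => (hprob Q hQ).2
    _ = (jointTypes X Z n).card := by simp

end JointType

/-! ### Achievability -/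

theorem exists_meanDist_le {X Y : Type*} {d : X → Y → ℝ} {D : ℝ} {n : ℕ}
    (hzero : ∀ x, ∃ y, d x y = 0) (hD : 0 ≤ D) (x : Fin n → X) :
    ∃ y : Fin n → Y, meanDist d x y ≤ D := by
  choose r hr using hzero
  exact ⟨fun i => r (x i), by simpa [meanDist, hr] using hD⟩

section BallMass

theorem neg_log_sum_le_klDiv_add {S : Type*} [Fintype S] {w q : S → ℝ} (hw : IsProbDist w)
    (hq : IsProbDist q) {c : ℝ} (hc : 0 < c) (hcq : ∀ s, c ≤ q s) {B : Finset S}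
    (hB : B.Nonempty) {η : ℝ} (hη : 1 - η ≤ ∑ s ∈ B, w s) :
    -Real.log (∑ s ∈ B, q s) ≤ klDiv w q + 1 + η * -Real.log c := by
  obtain ⟨s₀, hs₀⟩ := hB
  have hcB : c ≤ ∑ s ∈ B, q s :=
    (hcq s₀).trans (single_le_sum (fun s _ => hq.1 s) hs₀)
  have hqB := hc.trans_le hcB
  have hdpi := sum_mul_neg_log_sum_le_klDiv_add_one hw hq
    (fun s h => absurd h (hc.trans_le (hcq s)).ne') hqB
  have hη0 : 0 ≤ η := by linarith [hw.sum_le_one B]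
  have hlog0 : 0 ≤ -Real.log (∑ s ∈ B, q s) :=
    neg_nonneg.2 (Real.log_nonpos hqB.le (hq.sum_le_one B))
  have hlogc : -Real.log (∑ s ∈ B, q s) ≤ -Real.log c := neg_le_neg (Real.log_le_log hc hcB)
  linarith [mul_le_mul_of_nonneg_right hη hlog0, mul_le_mul_of_nonneg_left hlogc hη0]

variable {X Z Y : Type*} [Fintype X] [Fintype Z] [Fintype Y]

theorem neg_log_sum_productLaw_le [DecidableEq X] [DecidableEq Z] {n : ℕ} (hn : 0 < n)
    {x : Fin n → X} {z : Fin n → Z} {W : X → Z → Y → ℝ} (hW : ∀ a b, IsProbDist (W a b))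
    {q : Z → Y → ℝ} (hq : ∀ b, IsProbDist (q b)) {c : ℝ} (hc : 0 < c) (hcq : ∀ b y, c ≤ q b y)
    {B : Finset (Fin n → Y)} (hB : B.Nonempty) {η : ℝ}
    (hη : 1 - η ≤ ∑ y ∈ B, productLaw (fun i => W (x i) (z i)) y) :
    -Real.log (∑ y ∈ B, productLaw (fun i => q (z i)) y) ≤
      n * (∑ a, ∑ b, jointEmpDist x z a b * klDiv (W a b) (q b) + η * -Real.log c) + 1 := by
  have hcn : ∀ y, c ^ n ≤ productLaw (fun i => q (z i)) y := fun y => by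
    simpa [productLaw] using prod_le_prod (s := univ) (fun _ _ => hc.le) fun i _ => hcq (z i) (y i)
  have hball := neg_log_sum_le_klDiv_add (isProbDist_productLaw fun i => hW (x i) (z i))
    (isProbDist_productLaw fun i => hq (z i)) (pow_pos hc n) hcn hB hη
  rw [klDiv_productLaw (fun i => (hW (x i) (z i)).2)
      fun i y h => absurd h (hc.trans_le (hcq _ y)).ne',
    sum_apply_eq_mul_sum_jointEmpDist hn x z fun a b => klDiv (W a b) (q b), Real.log_pow] at hball
  linarith

variable [Nonempty X] [Nonempty Y] {d : X → Y → ℝ} {D : ℝ} {Q : X → Z → ℝ}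

theorem sum_mul_klDiv_mixture_le [DecidableEq Y] (hQ : IsJointProbDist Q) {V : X → Z → Y → ℝ}
    (hV : ∀ a b, IsProbDist (V a b)) (r : X → Y) {θ : ℝ} (hθ0 : 0 < θ) (hθ1 : θ < 1) :
    ∑ a, ∑ b, Q a b * klDiv (fun y => (1 - θ) * V a b y + θ * (Pi.single (r a) 1 : Y → ℝ) y)
        (fun y => (1 - θ) * outputLaw Q V b y + θ * (1 / Fintype.card Y)) ≤
      condMutualInfo Q V + θ * Real.log (Fintype.card Y) := by
  have hout := isProbDist_outputLaw hQ.1 hV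
  have hterm : ∀ a b, Q a b * klDiv
      (fun y => (1 - θ) * V a b y + θ * (Pi.single (r a) 1 : Y → ℝ) y)
      (fun y => (1 - θ) * outputLaw Q V b y + θ * (1 / Fintype.card Y)) ≤
        (1 - θ) * (Q a b * klDiv (V a b) (outputLaw Q V b)) +
          Q a b * (θ * Real.log (Fintype.card Y)) := fun a b => by
    rcases eq_or_ne (Q a b) 0 with h | h
    · simp [h]
    rw [mul_left_comm, ← mul_add]
    refine mul_le_mul_of_nonneg_left ?_ (hQ.1 a b)
    refine (klDiv_mixture_le (hV a b).1 (isProbDist_single (r a)).1 (hout b).1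
      isProbDist_uniform.1 (fun y => eq_zero_of_outputLaw_eq_zero hQ.1 hV h)
      (fun y h0 => absurd h0 (by positivity)) hθ0 hθ1).trans_eq ?_
    rw [klDiv_single, one_div, Real.log_inv, neg_neg]
  calc _ ≤ ∑ a, ∑ b, ((1 - θ) * (Q a b * klDiv (V a b) (outputLaw Q V b)) +
        Q a b * (θ * Real.log (Fintype.card Y))) :=
        sum_le_sum fun a _ => sum_le_sum fun b _ => hterm a b
    _ = (1 - θ) * condMutualInfo Q V + θ * Real.log (Fintype.card Y) := by
        simp_rw [sum_add_distrib, ← mul_sum, ← sum_mul, hQ.2, one_mul,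
          condMutualInfo_eq_sum_mul_klDiv hQ.1]
    _ ≤ condMutualInfo Q V + θ * Real.log (Fintype.card Y) := by
        nlinarith [condMutualInfo_nonneg hQ.1 hV]

/-- Mixing in the noiseless channel leaves slack in the distortion constraint, and mixing in the
uniform law keeps the output law away from zero. -/
theorem exists_slack_channel (hzero : ∀ x, ∃ y, d x y = 0) (hD : 0 ≤ D) {ε : ℝ} (hε : 0 < ε) :
    ∃ θ : ℝ, 0 < θ ∧ ∀ Q : X → Z → ℝ, IsJointProbDist Q →
      ∃ (W : X → Z → Y → ℝ) (q : Z → Y → ℝ), (∀ a b, IsProbDist (W a b)) ∧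
        (∀ b, IsProbDist (q b)) ∧ (∀ b y, θ / Fintype.card Y ≤ q b y) ∧
        ∑ a, ∑ b, Q a b * ∑ y, W a b y * d a y ≤ (1 - θ) * D ∧
        ∑ a, ∑ b, Q a b * klDiv (W a b) (q b) ≤ condRateDistortion d D Q + ε := by
  classical
  have hcard : 0 ≤ Real.log (Fintype.card Y) := Real.log_natCast_nonneg _
  obtain ⟨θ, hθ0, hθ⟩ := exists_pos_mul_lt (half_pos hε) (Real.log (Fintype.card Y) + ε / 2)
  have hθ1 : θ < 1 := by nlinarith
  refine ⟨θ, hθ0, fun Q hQ => ?_⟩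
  obtain ⟨V, hV, hVD, hVI⟩ := exists_channel_condMutualInfo_lt hzero hD Q (half_pos hε)
  have hout := isProbDist_outputLaw hQ.1 hV
  choose r hr using hzero
  refine ⟨fun a b y => (1 - θ) * V a b y + θ * (Pi.single (r a) 1 : Y → ℝ) y,
    fun b y => (1 - θ) * outputLaw Q V b y + θ * (1 / Fintype.card Y),
    fun a b => (hV a b).mixture (isProbDist_single (r a)) hθ0.le hθ1.le,
    fun b => (hout b).mixture isProbDist_uniform hθ0.le hθ1.le, fun b y => ?_, ?_, ?_⟩
  · rw [mul_one_div]
    exact le_add_of_nonneg_left (mul_nonneg (sub_pos.2 hθ1).le ((hout b).1 y))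
  · have hcost : ∀ a b, ∑ y, ((1 - θ) * V a b y + θ * (Pi.single (r a) 1 : Y → ℝ) y) * d a y =
        (1 - θ) * ∑ y, V a b y * d a y := fun a b => by
      simp [add_mul, sum_add_distrib, mul_assoc, ← mul_sum, Pi.single_apply, hr]
    simp_rw [hcost, mul_left_comm _ (1 - θ), ← mul_sum]
    refine mul_le_mul_of_nonneg_left ?_ (sub_pos.2 hθ1).le
    simpa only [mul_sum, mul_assoc] using hVD
  · refine (sum_mul_klDiv_mixture_le hQ hV r hθ0 hθ1).trans ?_
    linarith [mul_pos hε hθ0]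

theorem exists_channel_exp_le_sum_productLaw [DecidableEq X] [DecidableEq Z]
    (hd : ∀ x y, 0 ≤ d x y) (hzero : ∀ x, ∃ y, d x y = 0) (hD : 0 ≤ D) {ε : ℝ} (hε : 0 < ε) :
    ∃ q : (X → Z → ℝ) → Z → Y → ℝ, (∀ Q, IsJointProbDist Q → ∀ b, IsProbDist (q Q b)) ∧
      ∀ᶠ n : ℕ in atTop, ∀ (x : Fin n → X) (z : Fin n → Z),
        Real.exp (-(n * (condRateDistortion d D (jointEmpDist x z) + ε))) ≤
          ∑ y with meanDist d x y ≤ D, productLaw (fun i => q (jointEmpDist x z) (z i)) y := by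
  obtain ⟨θ, hθ, hslack⟩ := exists_slack_channel (Z := Z) hzero hD (half_pos hε)
  choose! W q hW hq hθq hWD hkl using hslack
  have hc : 0 < θ / Fintype.card Y := by positivity
  obtain ⟨η, hη, hηε⟩ := exists_pos_mul_lt (show 0 < ε / 4 by positivity)
    (-Real.log (θ / Fintype.card Y))
  refine ⟨q, hq, ?_⟩
  filter_upwards [eventually_gt_atTop 0, eventually_sub_le_sum_meanDist_le hd hD hθ hη,
    tendsto_natCast_atTop_atTop.eventually_ge_atTop (4 / ε)] with n hn hball hnε x z
  have hQ := isJointProbDist_jointEmpDist hn x z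
  have hmean := hball x (fun i => W (jointEmpDist x z) (x i) (z i)) (fun i => hW _ hQ _ _) (by
    rw [sum_apply_eq_mul_sum_jointEmpDist hn x z
      fun a b => ∑ y, W (jointEmpDist x z) a b y * d a y]
    exact mul_le_mul_of_nonneg_left (hWD _ hQ) n.cast_nonneg)
  obtain ⟨y₀, hy₀⟩ := exists_meanDist_le hzero hD x
  have hneglog := neg_log_sum_productLaw_le hn (hW _ hQ) (hq _ hQ) hc (hθq _ hQ)
    ⟨y₀, mem_filter.2 ⟨mem_univ _, hy₀⟩⟩ hmean
  have hpos : 0 < ∑ y with meanDist d x y ≤ D,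
      productLaw (fun i => q (jointEmpDist x z) (z i)) y :=
    sum_pos (fun y _ => prod_pos fun i _ => hc.trans_le (hθq _ hQ _ _))
      ⟨y₀, mem_filter.2 ⟨mem_univ _, hy₀⟩⟩
  have hrate : n * (∑ a, ∑ b, jointEmpDist x z a b *
      klDiv (W (jointEmpDist x z) a b) (q (jointEmpDist x z) b) +
        η * -Real.log (θ / Fintype.card Y)) ≤
      n * (condRateDistortion d D (jointEmpDist x z) + ε / 2 + ε / 4) :=
    mul_le_mul_of_nonneg_left (add_le_add (hkl _ hQ) (by linarith)) n.cast_nonneg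
  rw [← Real.le_log_iff_exp_le hpos]
  rw [div_le_iff₀ hε] at hnε
  linarith

end BallMass

section UniformMixture

variable {τ S : Type*} {T : Finset τ} {f : τ → S → ℝ}

/-- The mixture of the laws `f t`, `t ∈ T`, with equal weights. -/
noncomputable def uniformMixture (T : Finset τ) (f : τ → S → ℝ) (s : S) : ℝ :=
  (∑ t ∈ T, f t s) / T.card

theorem isProbDist_uniformMixture [Fintype S] (hT : T.Nonempty)
    (hf : ∀ t ∈ T, IsProbDist (f t)) : IsProbDist (uniformMixture T f) := by
  refine ⟨fun s => div_nonneg (sum_nonneg fun t ht => (hf t ht).1 s) T.card.cast_nonneg, ?_⟩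
  have hcard : (T.card : ℝ) ≠ 0 := mod_cast hT.card_pos.ne'
  simp_rw [uniformMixture]
  rw [← sum_div, sum_comm, sum_congr rfl fun t ht => (hf t ht).2, sum_const, nsmul_one,
    div_self hcard]

theorem sum_div_card_le_sum_uniformMixture (hf : ∀ t ∈ T, ∀ s, 0 ≤ f t s) {t : τ} (ht : t ∈ T)
    (B : Finset S) : (∑ s ∈ B, f t s) / T.card ≤ ∑ s ∈ B, uniformMixture T f s := by
  simp_rw [uniformMixture]
  rw [← sum_div]
  gcongr with s
  exact single_le_sum (f := fun t => f t s) (fun t ht => hf t ht s) ht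

end UniformMixture

section Achievability

variable {X Z Y : Type*} [Fintype X] [Fintype Z] [Fintype Y] {d : X → Y → ℝ} {D : ℝ}
  {P : X → Z → ℝ} {V ε : ℝ} {n : ℕ}

theorem pairLaw_mul_exp_condRateDistortion_le [DecidableEq X] [DecidableEq Z] (hn : 0 < n)
    (hP : ∀ a b, 0 < P a b)
    (hV : ∀ Q, IsJointProbDist Q → condRateDistortion d D Q - klDiv2 Q P ≤ V)
    (s : (Fin n → X) × (Fin n → Z)) :
    pairLaw P s * Real.exp (n * (condRateDistortion d D (jointEmpDist s.1 s.2) + ε)) ≤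
      Real.exp (n * (V + ε)) * pairLaw (jointEmpDist s.1 s.2) s := by
  have hQ := isJointProbDist_jointEmpDist hn s.1 s.2
  rw [pairLaw_eq_pairLaw_jointEmpDist_mul_exp hn hP, mul_assoc, ← Real.exp_add, mul_comm]
  refine mul_le_mul_of_nonneg_right (Real.exp_le_exp.2 ?_) ((isProbDist_pairLaw hQ).1 s)
  linarith [mul_le_mul_of_nonneg_left (hV _ hQ) (Nat.cast_nonneg (α := ℝ) n)]

theorem exists_isCompleteStrategy_of_exp_le_sum [DecidableEq X] [DecidableEq Z] (hn : 0 < n)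
    (hP : ∀ a b, 0 < P a b)
    (hV : ∀ Q, IsJointProbDist Q → condRateDistortion d D Q - klDiv2 Q P ≤ V)
    {μ : (Fin n → Z) → (Fin n → Y) → ℝ} (hμ : ∀ z, IsProbDist (μ z)) {m : ℝ} (hm : 0 < m)
    (hball : ∀ (x : Fin n → X) (z : Fin n → Z),
      Real.exp (-(n * (condRateDistortion d D (jointEmpDist x z) + ε))) / m ≤
        ∑ y with meanDist d x y ≤ D, μ z y) :
    ∃ St : (Fin n → Z) → List (Fin n → Y), IsCompleteStrategy d D St ∧
      expectedGuesses d D P St ≤ m * Real.exp (n * (V + ε)) * (jointTypes X Z n).card := by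
  have hpairLaw : ∀ s : (Fin n → X) × (Fin n → Z), 0 < pairLaw P s :=
    fun s => prod_pos fun i _ => hP _ _
  choose St hSt hle using fun z => exists_list_sum_mul_firstHit_le (hμ z)
    (fun x => hpairLaw (x, z))
    (fun x => (div_pos (Real.exp_pos _) hm).trans_le (hball x z)) univ
  refine ⟨St, fun z x => hSt z x (mem_univ x), ?_⟩
  have hterm : ∀ x z, pairLaw P (x, z) / ∑ y with meanDist d x y ≤ D, μ z y ≤
      m * Real.exp (n * (V + ε)) * pairLaw (jointEmpDist x z) (x, z) := fun x z => by
    refine (div_le_div_of_nonneg_left (hpairLaw _).le (div_pos (Real.exp_pos _) hm)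
      (hball x z)).trans ?_
    rw [div_div_eq_mul_div, Real.exp_neg, div_inv_eq_mul, mul_right_comm, mul_comm _ m,
      mul_assoc m]
    exact mul_le_mul_of_nonneg_left (pairLaw_mul_exp_condRateDistortion_le hn hP hV (x, z)) hm.le
  rw [expectedGuesses_eq_sum_pairLaw, Fintype.sum_prod_type_right]
  calc ∑ z, ∑ x, pairLaw P (x, z) * (countG d D (St z) x : ℝ)
      ≤ ∑ z, ∑ x, m * Real.exp (n * (V + ε)) * pairLaw (jointEmpDist x z) (x, z) :=
        sum_le_sum fun z _ => (hle z).trans (sum_le_sum fun x _ => hterm x z)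
    _ = m * Real.exp (n * (V + ε)) *
          ∑ s : (Fin n → X) × (Fin n → Z), pairLaw (jointEmpDist s.1 s.2) s := by
        simp_rw [Fintype.sum_prod_type_right, mul_sum]
    _ ≤ m * Real.exp (n * (V + ε)) * (jointTypes X Z n).card :=
        mul_le_mul_of_nonneg_left (sum_pairLaw_jointEmpDist_le_card hn) (by positivity)

theorem exists_isCompleteStrategy_of_exp_le_sum_productLaw [DecidableEq X] [DecidableEq Z]
    [Nonempty X] [Nonempty Z] (hn : 0 < n) (hP : ∀ a b, 0 < P a b)
    (hV : ∀ Q, IsJointProbDist Q → condRateDistortion d D Q - klDiv2 Q P ≤ V)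
    {q : (X → Z → ℝ) → Z → Y → ℝ} (hq : ∀ Q, IsJointProbDist Q → ∀ b, IsProbDist (q Q b))
    (hball : ∀ (x : Fin n → X) (z : Fin n → Z),
      Real.exp (-(n * (condRateDistortion d D (jointEmpDist x z) + ε))) ≤
        ∑ y with meanDist d x y ≤ D, productLaw (fun i => q (jointEmpDist x z) (z i)) y) :
    ∃ St : (Fin n → Z) → List (Fin n → Y), IsCompleteStrategy d D St ∧
      expectedGuesses d D P St ≤ ((jointTypes X Z n).card : ℝ) ^ 2 * Real.exp (n * (V + ε)) := by
  have hTne : (jointTypes X Z n).Nonempty :=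
    ⟨_, jointEmpDist_mem_jointTypes (fun _ => Classical.arbitrary X) fun _ => Classical.arbitrary Z⟩
  have hTcard : (0 : ℝ) < (jointTypes X Z n).card := mod_cast hTne.card_pos
  have hprod : ∀ z : Fin n → Z, ∀ Q ∈ jointTypes X Z n,
      IsProbDist (productLaw fun i => q Q (z i)) := fun z Q hQ =>
    isProbDist_productLaw fun i => hq Q (isJointProbDist_of_mem_jointTypes hn hQ) _
  obtain ⟨St, hSt, hle⟩ := exists_isCompleteStrategy_of_exp_le_sum hn hP hV
    (fun z => isProbDist_uniformMixture hTne (hprod z)) hTcard fun x z =>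
      (div_le_div_of_nonneg_right (hball x z) hTcard.le).trans <|
        sum_div_card_le_sum_uniformMixture (fun Q hQ => (hprod z Q hQ).1)
          (jointEmpDist_mem_jointTypes x z) _
  exact ⟨St, hSt, hle.trans_eq (by ring)⟩

theorem eventually_exists_isCompleteStrategy_expectedGuesses_le [Nonempty X] [Nonempty Z]
    [Nonempty Y] (hd : ∀ x y, 0 ≤ d x y) (hzero : ∀ x, ∃ y, d x y = 0) (hD : 0 ≤ D)
    (hP : ∀ a b, 0 < P a b)
    (hV : ∀ Q, IsJointProbDist Q → condRateDistortion d D Q - klDiv2 Q P ≤ V) (hε : 0 < ε) :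
    ∀ᶠ n : ℕ in atTop, ∃ St : (Fin n → Z) → List (Fin n → Y), IsCompleteStrategy d D St ∧
      expectedGuesses d D P St ≤
        ((n : ℝ) + 1) ^ (2 * (Fintype.card Z * Fintype.card X)) * Real.exp (n * (V + ε)) := by
  classical
  obtain ⟨q, hq, hball⟩ := exists_channel_exp_le_sum_productLaw (Z := Z) hd hzero hD hε
  filter_upwards [hball, eventually_gt_atTop 0] with n hball hn
  obtain ⟨St, hSt, hle⟩ := exists_isCompleteStrategy_of_exp_le_sum_productLaw hn hP hV hq hball
  refine ⟨St, hSt, hle.trans ?_⟩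
  rw [mul_comm 2, pow_mul]
  gcongr
  exact_mod_cast card_jointTypes_le X Z n

end Achievability

/-! ### The deception exponent -/

section Exponent

variable {X Z Y : Type*}

theorem exists_isCompleteStrategy [Finite Y] {d : X → Y → ℝ} {D : ℝ}
    (hzero : ∀ x, ∃ y, d x y = 0) (hD : 0 ≤ D) (n : ℕ) :
    ∃ St : (Fin n → Z) → List (Fin n → Y), IsCompleteStrategy d D St := by
  have := Fintype.ofFinite Y
  classical
  refine ⟨fun _ => univ.toList, fun _ x => ?_⟩
  obtain ⟨y, hy⟩ := exists_meanDist_le hzero hD x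
  exact ⟨y, mem_toList.2 (mem_univ y), hy⟩

theorem exists_isJointProbDist (X Z : Type*) [Fintype X] [Fintype Z] [Nonempty X] [Nonempty Z] :
    ∃ Q : X → Z → ℝ, IsJointProbDist Q := by
  classical
  exact ⟨_, isJointProbDist_jointEmpDist one_pos (fun _ => Classical.arbitrary X)
    fun _ => Classical.arbitrary Z⟩

theorem tendsto_log_one_add_mul_div_atTop {K : ℝ} (hK : 0 ≤ K) :
    Tendsto (fun n : ℕ => Real.log (1 + n * K) / n) atTop (𝓝 0) := by
  have hlog : Tendsto (fun n : ℕ => Real.log n / (n : ℝ)) atTop (𝓝 0) :=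
    Real.isLittleO_log_id_atTop.tendsto_div_nhds_zero.comp tendsto_natCast_atTop_atTop
  have hub : Tendsto (fun n : ℕ => Real.log (1 + K) / (n : ℝ) + Real.log n / (n : ℝ))
      atTop (𝓝 0) := by
    simpa using (tendsto_const_div_atTop_nhds_zero_nat (Real.log (1 + K))).add hlog
  refine squeeze_zero' (Eventually.of_forall fun n => ?_)
    ((eventually_gt_atTop 0).mono fun n hn => ?_) hub
  · exact div_nonneg (Real.log_nonneg (le_add_of_nonneg_right (by positivity))) n.cast_nonneg
  · have hn1 : (1 : ℝ) ≤ n := mod_cast hn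
    rw [← add_div, ← Real.log_mul (by positivity) (by positivity)]
    gcongr
    linarith

variable [Fintype X] [Fintype Z] {d : X → Y → ℝ} {D : ℝ} {P : X → Z → ℝ} {n : ℕ}

theorem sum_pairLaw_pos [Nonempty X] [Nonempty Z] (hP : ∀ a b, 0 < P a b) :
    0 < ∑ s : (Fin n → X) × (Fin n → Z), pairLaw P s :=
  sum_pos (fun _ _ => prod_pos fun _ _ => hP _ _) univ_nonempty

theorem sum_pairLaw_le_expectedGuesses (hP : ∀ a b, 0 < P a b)
    {St : (Fin n → Z) → List (Fin n → Y)} (hSt : IsCompleteStrategy d D St) :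
    ∑ s : (Fin n → X) × (Fin n → Z), pairLaw P s ≤ expectedGuesses d D P St := by
  classical
  rw [expectedGuesses_eq_sum_pairLaw]
  refine sum_le_sum fun s _ => le_mul_of_one_le_right (prod_pos fun i _ => hP _ _).le ?_
  obtain ⟨y, -, -, hidx⟩ := exists_idxOf_lt_firstHit (hSt s.2 s.1)
  exact_mod_cast (Nat.zero_le _).trans_lt hidx

/-- The logarithms of the expected numbers of guesses of the complete strategies of length `n`. -/
def logGuessesSet (d : X → Y → ℝ) (D : ℝ) (P : X → Z → ℝ) (n : ℕ) : Set ℝ :=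
  {r | ∃ St : (Fin n → Z) → List (Fin n → Y),
    IsCompleteStrategy d D St ∧ r = Real.log (expectedGuesses d D P St)}

theorem logGuessesSet_nonempty [Finite Y] (hzero : ∀ x, ∃ y, d x y = 0) (hD : 0 ≤ D)
    (P : X → Z → ℝ) (n : ℕ) : (logGuessesSet d D P n).Nonempty := by
  obtain ⟨St, hSt⟩ := exists_isCompleteStrategy (Z := Z) hzero hD n
  exact ⟨_, St, hSt, rfl⟩

theorem bddBelow_logGuessesSet [Nonempty X] [Nonempty Z] (d : X → Y → ℝ) (D : ℝ)
    (hP : ∀ a b, 0 < P a b) (n : ℕ) : BddBelow (logGuessesSet d D P n) := by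
  classical
  refine ⟨Real.log (∑ s : (Fin n → X) × (Fin n → Z), pairLaw P s), ?_⟩
  rintro _ ⟨St, hSt, rfl⟩
  exact Real.log_le_log (sum_pairLaw_pos hP) (sum_pairLaw_le_expectedGuesses hP hSt)

variable [Fintype Y]

/-- The values whose supremum over the joint distributions is the deception exponent. -/
def exponentSet (d : X → Y → ℝ) (D : ℝ) (P : X → Z → ℝ) : Set ℝ :=
  {r | ∃ Q : X → Z → ℝ, IsJointProbDist Q ∧ r = condRateDistortion d D Q - klDiv2 Q P}

theorem exponentSet_nonempty [Nonempty X] [Nonempty Z] (d : X → Y → ℝ) (D : ℝ)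
    (P : X → Z → ℝ) : (exponentSet d D P).Nonempty := by
  obtain ⟨Q, hQ⟩ := exists_isJointProbDist X Z
  exact ⟨_, Q, hQ, rfl⟩

variable [Nonempty X] [Nonempty Y]

theorem mul_sub_log_le_of_mem_logGuessesSet (hP : ∀ a b, 0 < P a b) (hn : 0 < n) {v r : ℝ}
    (hv : v ∈ exponentSet d D P) (hr : r ∈ logGuessesSet d D P n) :
    n * v - Real.log (1 + n * Real.log (Fintype.card Y)) ≤ r := by
  obtain ⟨Q, hQ, rfl⟩ := hv
  obtain ⟨St, hSt, rfl⟩ := hr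
  exact sub_le_iff_le_add.2
    (mul_condRateDistortion_sub_klDiv2_le_log_expectedGuesses hP hQ hn hSt)

theorem bddAbove_exponentSet (hzero : ∀ x, ∃ y, d x y = 0) (hD : 0 ≤ D)
    (hP : ∀ a b, 0 < P a b) : BddAbove (exponentSet d D P) := by
  obtain ⟨r, hr⟩ := logGuessesSet_nonempty hzero hD P 1
  refine ⟨r + Real.log (1 + Real.log (Fintype.card Y)), fun v hv => ?_⟩
  simpa using mul_sub_log_le_of_mem_logGuessesSet hP one_pos hv hr

variable [Nonempty Z]

theorem eventually_lt_sInf_logGuessesSet_div (hzero : ∀ x, ∃ y, d x y = 0) (hD : 0 ≤ D)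
    (hP : ∀ a b, 0 < P a b) {v : ℝ} (hv : v < sSup (exponentSet d D P)) :
    ∀ᶠ n : ℕ in atTop, v < sInf (logGuessesSet d D P n) / n := by
  obtain ⟨s, hs, hvs⟩ := exists_lt_of_lt_csSup (exponentSet_nonempty d D P) hv
  have hloss := tendsto_log_one_add_mul_div_atTop (Real.log_natCast_nonneg (Fintype.card Y))
  filter_upwards [eventually_gt_atTop 0, hloss.eventually_lt_const (sub_pos.2 hvs)] with n hn hlog
  have hn' : (0 : ℝ) < n := mod_cast hn
  have hle := le_csInf (logGuessesSet_nonempty hzero hD P n)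
    fun r => mul_sub_log_le_of_mem_logGuessesSet hP hn hs
  rw [lt_div_iff₀ hn']
  rw [div_lt_iff₀ hn'] at hlog
  linarith

theorem eventually_sInf_logGuessesSet_div_lt (hd : ∀ x y, 0 ≤ d x y)
    (hzero : ∀ x, ∃ y, d x y = 0) (hD : 0 ≤ D) (hP : ∀ a b, 0 < P a b) {v : ℝ}
    (hv : sSup (exponentSet d D P) < v) :
    ∀ᶠ n : ℕ in atTop, sInf (logGuessesSet d D P n) / n < v := by
  classical
  have hε := half_pos (sub_pos.2 hv)
  have hpoly := (tendsto_log_one_add_mul_div_atTop zero_le_one).const_mul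
    ((2 * (Fintype.card Z * Fintype.card X) : ℕ) : ℝ)
  rw [mul_zero] at hpoly
  filter_upwards [eventually_gt_atTop 0, hpoly.eventually_lt_const hε,
    eventually_exists_isCompleteStrategy_expectedGuesses_le hd hzero hD hP
      (fun Q hQ => le_csSup (bddAbove_exponentSet hzero hD hP) ⟨Q, hQ, rfl⟩) hε]
    with n hn hlog ⟨St, hSt, hle⟩
  have hn' : (0 : ℝ) < n := mod_cast hn
  have hguess := Real.log_le_log
    ((sum_pairLaw_pos hP).trans_le (sum_pairLaw_le_expectedGuesses hP hSt)) hle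
  rw [Real.log_mul (by positivity) (Real.exp_ne_zero _), Real.log_exp, Real.log_pow] at hguess
  rw [div_lt_iff₀ hn']
  rw [mul_one, add_comm, ← mul_div_assoc, div_lt_iff₀ hn'] at hlog
  linarith [csInf_le (bddBelow_logGuessesSet d D hP n) ⟨St, hSt, rfl⟩]

end Exponent

theorem stmt17_general {X Y Z : Type*} [Fintype X] [Fintype Z] [Fintype Y]
    [Nonempty X] [Nonempty Z] [Nonempty Y]
    (d : X → Y → ℝ) (hd : ∀ x y, 0 ≤ d x y)
    (hzero : ∀ x, ∃ y, d x y = 0)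
    (D : ℝ) (hD : 0 ≤ D)
    (P : X → Z → ℝ) (hfull : ∀ a b, 0 < P a b) :
    Tendsto
        (fun n : ℕ => (1 / (n : ℝ)) *
          sInf {r | ∃ St : (Fin n → Z) → List (Fin n → Y),
            (∀ (z : Fin n → Z) (x : Fin n → X), ∃ y ∈ St z, meanDist d x y ≤ D) ∧
            r = Real.log (∑ x : Fin n → X, ∑ z : Fin n → Z,
              (∏ i, P (x i) (z i)) * (countG d D (St z) x : ℝ))})
        atTop
        (𝓝 (sSup {r | ∃ Q : X → Z → ℝ, IsJointProbDist Q ∧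
          r = condRateDistortion d D Q - klDiv2 Q P})) := by
  simp_rw [one_div_mul_eq_div]
  exact tendsto_order.2
    ⟨fun v hv => eventually_lt_sInf_logGuessesSet_div hzero hD hfull hv,
      fun v hv => eventually_sInf_logGuessesSet_div_lt hd hzero hD hfull hv⟩

theorem stmt17 {X Z Y : Type*} [Fintype X] [Fintype Z] [Fintype Y]
    [Nonempty X] [Nonempty Z] [Nonempty Y]
    (d : X → Y → ℝ) (hd : ∀ x y, 0 ≤ d x y)
    (hzero : ∀ x, ∃ y, d x y = 0)
    (D : ℝ) (hD : 0 ≤ D)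
    (P : X → Z → ℝ) (hP : IsJointProbDist P) (hfull : ∀ a b, 0 < P a b) :
    Filter.liminf
        (fun n : ℕ => (1 / (n : ℝ)) *
          sInf {r | ∃ St : (Fin n → Z) → List (Fin n → Y),
            (∀ (z : Fin n → Z) (x : Fin n → X), ∃ y ∈ St z, meanDist d x y ≤ D) ∧
            r = Real.log (∑ x : Fin n → X, ∑ z : Fin n → Z,
              (∏ i, P (x i) (z i)) * (countG d D (St z) x : ℝ))})
        Filter.atTop
      = sSup {r | ∃ Q : X → Z → ℝ, IsJointProbDist Q ∧
          r = condRateDistortion d D Q - klDiv2 Q P} :=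
  (stmt17_general d hd hzero D hD P hfull).liminf_eq
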